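/- arXiv:1410.7156 — 9 statements merged into one kernel-verified Lean document; each statement's English description precedes it below -/
import Mathlib

section
/- Let L be an R-submodule of K^m with R^m ⊆ L and dim_ℂ(L/R^m) finite, and let w ∈ ℂ. Then L' := {x ∈ K^m : (z − w)·x ∈ L} is an R-submodule of K^m containing L, and dim_ℂ(L'/L) = m. -/
open Polynomial

set_option synthInstance.maxHeartbeats 1000000
set_option maxHeartbeats 1000000

noncomputable section

abbrev KM (m : ℕ) := Fin m → RatFunc ℂ

abbrev SubM (m : ℕ) := Submodule (Polynomial ℂ) (KM m)

def polyL0 (m : ℕ) : SubM m :=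
  Submodule.pi Set.univ fun _ => LinearMap.range (Algebra.linearMap (Polynomial ℂ) (RatFunc ℂ))

abbrev QuotMod (m : ℕ) (A B : SubM m) := ↥B ⧸ (A.comap B.subtype)

def fdim (m : ℕ) (A B : SubM m) : ℕ := Module.finrank ℂ (QuotMod m A B)

def zmul (m : ℕ) (w : ℂ) : KM m →ₗ[Polynomial ℂ] KM m :=
  (Polynomial.X - Polynomial.C w) • LinearMap.id

def quotSmul (m : ℕ) (p : Polynomial ℂ) (A B : SubM m) :
    QuotMod m A B →ₗ[ℂ] QuotMod m A B where
  toFun v := p • v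
  map_add' x y := smul_add p x y
  map_smul' c x := smul_comm p c x

def IsYChain (m n : ℕ) (k : ℕ → ℕ) (w : ℕ → ℂ) (L : ℕ → SubM m) : Prop :=
  L 0 = polyL0 m ∧
  (∀ i < n, L i ≤ L (i + 1)) ∧
  (∀ i < n, FiniteDimensional ℂ (QuotMod m (L i) (L (i + 1)))) ∧
  (∀ i < n, fdim m (L i) (L (i + 1)) = k (i + 1)) ∧
  (∀ i < n, ∀ x ∈ L (i + 1), zmul m (w (i + 1)) x ∈ L i)

lemma tf_KM (m : ℕ) : Module.IsTorsionFree ℂ[X] (KM m) where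
  isSMulRegular r hr := by
    intro a b h
    funext i
    have h' : r • a i = r • b i := congrFun h i
    rw [Algebra.smul_def, Algebra.smul_def] at h'
    exact mul_left_cancel₀ ((map_ne_zero_iff _ (IsFractionRing.injective ℂ[X] (RatFunc ℂ))).2
      hr.ne_zero) h'

lemma finrank_L (m : ℕ) (L : SubM m) (hL0 : polyL0 m ≤ L)
    (hfin : FiniteDimensional ℂ (QuotMod m (polyL0 m) L)) :
    Nonempty (L ≃ₗ[ℂ[X]] (Fin m → ℂ[X])) := by
  let ι : (Fin m → ℂ[X]) →ₗ[ℂ[X]] KM m :=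
    LinearMap.pi fun i => (Algebra.linearMap ℂ[X] (RatFunc ℂ)).comp (LinearMap.proj i)
  have hι : Function.Injective ι := by
    intro a b h
    funext i
    exact IsFractionRing.injective ℂ[X] (RatFunc ℂ) (congrFun h i)
  have hr : LinearMap.range ι = polyL0 m := by
    ext x
    simp only [polyL0, Submodule.mem_pi, LinearMap.mem_range]
    constructor
    · rintro ⟨y, rfl⟩ i _
      exact ⟨y i, rfl⟩
    · intro h
      choose y hy using fun i => h i (Set.mem_univ i)
      exact ⟨y, funext hy⟩
  have : Module.Finite ℂ[X] (polyL0 m) := hr ▸ Module.Finite.range ι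
  have f1 : Module.Finite ℂ[X] ((polyL0 m).comap L.subtype) :=
    Module.Finite.equiv (Submodule.comapSubtypeEquivOfLe hL0).symm
  have f2 : Module.Finite ℂ[X] (L ⧸ ((polyL0 m).comap L.subtype)) :=
    Module.Finite.of_restrictScalars_finite ℂ ℂ[X] (QuotMod m (polyL0 m) L)
  have f3 : Module.Finite ℂ[X] L := Module.Finite.of_submodule_quotient ((polyL0 m).comap L.subtype)
  have f4 : Module.IsTorsionFree ℂ[X] (KM m) := tf_KM m
  have f5 : Module.Free ℂ[X] L := inferInstance
  have up : Module.rank ℂ[X] L ≤ m := by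
    refine (Submodule.rank_le L).trans ?_
    rw [← IsLocalization.rank_eq (RatFunc ℂ) (nonZeroDivisors ℂ[X]) le_rfl]
    simp
  have lo : (m : Cardinal) ≤ Module.rank ℂ[X] L := by
    have := LinearMap.rank_le_of_injective (ι.codRestrict L fun c => hL0 (hr ▸ ⟨c, rfl⟩))
      (fun a b h => hι (congrArg Subtype.val h))
    simpa using this
  have hrk : Module.finrank ℂ[X] L = m := Module.finrank_eq_of_rank_eq (le_antisymm up lo)
  exact ⟨LinearEquiv.ofFinrankEq _ _ (by simp [hrk])⟩

theorem statement0 (m : ℕ) (hm : 2 ≤ m)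
    (L : SubM m) (hL0 : polyL0 m ≤ L)
    (hfin : FiniteDimensional ℂ (QuotMod m (polyL0 m) L))
    (w : ℂ) (L' : SubM m)
    (hL' : L' = L.comap (zmul m w)) :
    (∀ x : KM m, x ∈ L' ↔ (Polynomial.X - Polynomial.C w) • x ∈ L) ∧
    L ≤ L' ∧
    fdim m L L' = m := by
  have h1 : ∀ x : KM m, x ∈ L' ↔ (Polynomial.X - Polynomial.C w) • x ∈ L := by
    intro x; subst hL'; rfl
  have h2 : L ≤ L' := fun x hx => (h1 x).2 (L.smul_mem _ hx)
  refine ⟨h1, h2, ?_⟩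
  obtain ⟨e⟩ := finrank_L m L hL0 hfin
  have := tf_KM m
  have hne : (X - C w : ℂ[X]) ≠ 0 := X_sub_C_ne_zero w
  let μ : L' →ₗ[ℂ[X]] L :=
    ((zmul m w).comp L'.subtype).codRestrict L (fun c => (h1 c).1 c.2)
  have hμ : ∀ x : L', ((μ x : L) : KM m) = (X - C w : ℂ[X]) • (x : KM m) := fun x => rfl
  let ev : (Fin m → ℂ[X]) →ₗ[ℂ] (Fin m → ℂ) :=
    LinearMap.pi fun i => (Polynomial.leval w).comp (LinearMap.proj i)
  have hev : ∀ p i, ev p i = (p i).eval w := fun p i => rfl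
  let g : L' →ₗ[ℂ] (Fin m → ℂ) :=
    ev.comp ((e.toLinearMap.comp μ).restrictScalars ℂ)
  have hg : ∀ x, g x = ev (e (μ x)) := fun x => rfl
  have hsurj : Function.Surjective g := by
    intro v
    let y : L := e.symm (fun i => C (v i))
    have hx : (X - C w : ℂ[X]) •
        (((algebraMap ℂ[X] (RatFunc ℂ) (X - C w))⁻¹ • (y : KM m)) : KM m) = y := by
      rw [← algebraMap_smul (RatFunc ℂ) (X - C w : ℂ[X]), smul_inv_smul₀]
      exact (map_ne_zero_iff _ (IsFractionRing.injective ℂ[X] (RatFunc ℂ))).2 hne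
    refine ⟨⟨(algebraMap ℂ[X] (RatFunc ℂ) (X - C w))⁻¹ • (y : KM m),
      (h1 _).2 (by rw [hx]; exact y.2)⟩, ?_⟩
    rw [hg]
    have : μ ⟨(algebraMap ℂ[X] (RatFunc ℂ) (X - C w))⁻¹ • (y : KM m),
      (h1 _).2 (by rw [hx]; exact y.2)⟩ = y := Subtype.ext hx
    rw [this]
    funext i
    simp [hev, y]
  have hker : LinearMap.ker g = (L.comap L'.subtype).restrictScalars ℂ := by
    ext x
    simp only [LinearMap.mem_ker, Submodule.restrictScalars_mem, Submodule.mem_comap,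
      Submodule.subtype_apply]
    constructor
    · intro h
      have hd : ∀ i, ∃ q, e (μ x) i = (X - C w) * q := fun i => by
        have : (e (μ x) i).eval w = 0 := congrFun h i
        exact dvd_iff_isRoot.2 this
      choose q hq using hd
      have h3 : e (μ x) = (X - C w : ℂ[X]) • q := funext hq
      have h4 : μ x = (X - C w : ℂ[X]) • e.symm q := by
        apply e.injective
        rw [h3, map_smul, e.apply_symm_apply]
      have h5 : (X - C w : ℂ[X]) • (x : KM m) = (X - C w : ℂ[X]) • (e.symm q : KM m) := by
        rw [← hμ, h4]; rfl
      have h6 : (x : KM m) = e.symm q := smul_right_injective _ hne h5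
      rw [h6]; exact (e.symm q).2
    · intro h
      have h4 : μ x = (X - C w : ℂ[X]) • (⟨x, h⟩ : L) := Subtype.ext rfl
      rw [hg, h4, map_smul]
      funext i
      simp [hev]
  unfold fdim QuotMod
  rw [← (Submodule.Quotient.restrictScalarsEquiv ℂ (L.comap L'.subtype)).finrank_eq,
    ← hker, (g.quotKerEquivOfSurjective hsurj).finrank_eq]
  simp
end
end

section
/- Fix k̲ = (k₁,…,k_n) and w̲ = (w₁,…,w_n), and let k̲' = (k₁,…,k_{n−1}), w̲' = (w₁,…,w_{n−1}). Let (L₁,…,L_{n−1}) ∈ Y(k̲')_{w̲'} and set P := {x ∈ K^m : (z − w_n)·x ∈ L_{n−1}}. Then: (a) every ℂ-subspace L_n of K^m with L_{n−1} ⊆ L_n ⊆ P is an R-submodule; (b) a subspace L_n completes the chain to a point of Y(k̲)_w̲ if and only if L_{n−1} ⊆ L_n ⊆ P and dim_ℂ(L_n/L_{n−1}) = k_n. Consequently, the fibre of the forgetful map Y(k̲)_w̲ → Y(k̲')_{w̲'} over (L₁,…,L_{n−1}) is in bijection, via L_n ↦ L_n/L_{n−1}, with the set of k_n-dimensional ℂ-subspaces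 of the m-dimensional ℂ-vector space P/L_{n−1}. -/
open Polynomial

set_option synthInstance.maxHeartbeats 1000000
set_option maxHeartbeats 1000000

noncomputable section

theorem aux_smul_mem (m : ℕ) (w : ℂ) (N : SubM m) (x : KM m) (hx : zmul m w x ∈ N)
    (p : Polynomial ℂ) : p • x - (p.eval w) • x ∈ N := by
  have h1 : p = C (p.eval w) + (p /ₘ (X - C w)) * (X - C w) := by
    have := Polynomial.modByMonic_add_div p (X - C w)
    rw [Polynomial.modByMonic_X_sub_C_eq_C_eval] at this
    rw [mul_comm]; exact this.symm
  have h2 : (p.eval w) • x = (C (p.eval w)) • x := by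
    rw [← Polynomial.algebraMap_eq, algebraMap_smul]
  have h3 : p • x - (p.eval w) • x = (p /ₘ (X - C w)) • zmul m w x := by
    rw [h2]
    conv_lhs => rw [h1]
    simp only [zmul, LinearMap.smul_apply, LinearMap.id_apply, add_smul, mul_smul]
    simp
  rw [h3]
  exact N.smul_mem _ hx

theorem aux_zmul_inj (m : ℕ) (w : ℂ) : Function.Injective (zmul m w) := by
  intro x y h
  simp only [zmul, LinearMap.smul_apply, LinearMap.id_apply] at h
  have h0 : algebraMap (Polynomial ℂ) (RatFunc ℂ) (X - C w) ≠ 0 := by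
    rw [Ne, map_eq_zero_iff _ (RatFunc.algebraMap_injective ℂ)]
    exact Polynomial.X_sub_C_ne_zero w
  funext i
  have hi := congrFun h i
  rw [Pi.smul_apply, Pi.smul_apply, Algebra.smul_def, Algebra.smul_def] at hi
  exact mul_left_cancel₀ h0 hi

theorem aux_zmul_surj (m : ℕ) (w : ℂ) : Function.Surjective (zmul m w) := by
  intro y
  have h0 : algebraMap (Polynomial ℂ) (RatFunc ℂ) (X - C w) ≠ 0 := by
    rw [Ne, map_eq_zero_iff _ (RatFunc.algebraMap_injective ℂ)]
    exact Polynomial.X_sub_C_ne_zero w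
  refine ⟨fun i => (algebraMap (Polynomial ℂ) (RatFunc ℂ) (X - C w))⁻¹ * y i, ?_⟩
  funext i
  simp only [zmul, LinearMap.smul_apply, LinearMap.id_apply, Pi.smul_apply]
  rw [Algebra.smul_def, mul_inv_cancel_left₀ h0]

/-- `M / N` identified with its image in `P / N`. -/
def auxEquiv (m : ℕ) (N M P : SubM m) (h2 : M ≤ P) :
    QuotMod m N M ≃ₗ[Polynomial ℂ]
      (Submodule.map (Submodule.mkQ (N.comap P.subtype)) (M.comap P.subtype)) := by
  refine (Submodule.quotEquivOfEq _ (LinearMap.ker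
    ((Submodule.mkQ (N.comap P.subtype)).comp (Submodule.inclusion h2))) ?_).trans
    ((LinearMap.quotKerEquivRange _).trans (LinearEquiv.ofEq _ _ ?_))
  · ext x
    simp [Submodule.Quotient.mk_eq_zero]
  · rw [LinearMap.range_comp, Submodule.range_inclusion]

theorem aux_fdim (m : ℕ) (N M P : SubM m) (h2 : M ≤ P) :
    fdim m N M = Module.finrank ℂ (Submodule.restrictScalars ℂ
      (Submodule.map (Submodule.mkQ (N.comap P.subtype)) (M.comap P.subtype))) :=
  LinearEquiv.finrank_eq ((auxEquiv m N M P h2).restrictScalars ℂ)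

theorem aux_fin (m : ℕ) (N M P : SubM m) (h2 : M ≤ P)
    (h : FiniteDimensional ℂ (QuotMod m N P)) : FiniteDimensional ℂ (QuotMod m N M) := by
  have : FiniteDimensional ℂ (Submodule.restrictScalars ℂ
      (Submodule.map (Submodule.mkQ (N.comap P.subtype)) (M.comap P.subtype))) := inferInstance
  exact @Module.Finite.equiv ℂ (Submodule.restrictScalars ℂ
      (Submodule.map (Submodule.mkQ (N.comap P.subtype)) (M.comap P.subtype))) _ _ _ _ _ _ this
    ((auxEquiv m N M P h2).restrictScalars ℂ).symm

theorem aux_fin_congr (m : ℕ) (A B A' B' : SubM m) (hA : A' = A) (hB : B' = B)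
    (h : FiniteDimensional ℂ (QuotMod m A B)) : FiniteDimensional ℂ (QuotMod m A' B') := by
  subst hA hB; exact h

/-- The standard lattice is free. -/
def auxL0 (m : ℕ) : (Fin m → Polynomial ℂ) ≃ₗ[Polynomial ℂ] polyL0 m := by
  refine (LinearEquiv.ofInjective (LinearMap.pi fun i =>
    (Algebra.linearMap (Polynomial ℂ) (RatFunc ℂ)).comp (LinearMap.proj i)) ?_).trans
    (LinearEquiv.ofEq _ _ ?_)
  · intro x y h
    funext i
    have := congrFun h i
    exact RatFunc.algebraMap_injective ℂ this
  · ext x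
    simp only [polyL0, LinearMap.mem_range, Submodule.mem_pi]
    constructor
    · rintro ⟨y, rfl⟩ i _
      exact ⟨y i, rfl⟩
    · intro h
      choose y hy using fun i => h i (Set.mem_univ i)
      exact ⟨y, funext hy⟩

theorem aux_embed (m n : ℕ) (k : ℕ → ℕ) (w : ℕ → ℂ) (L : ℕ → SubM m)
    (hL : IsYChain m n k w L) : ∀ i ≤ n, polyL0 m ≤ L i ∧
      ∃ f : KM m →ₗ[Polynomial ℂ] KM m, Function.Injective f ∧ ∀ x ∈ L i, f x ∈ polyL0 m := by
  obtain ⟨h0, h1, -, -, h4⟩ := hL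
  intro i
  induction i with
  | zero => exact fun _ => ⟨h0.ge, LinearMap.id, fun _ _ h => h, fun x hx => h0 ▸ hx⟩
  | succ i ih =>
    intro hi
    obtain ⟨ha, f, hf, hfm⟩ := ih (by omega)
    refine ⟨ha.trans (h1 i (by omega)), f.comp (zmul m (w (i+1))), ?_, ?_⟩
    · exact hf.comp (aux_zmul_inj _ _)
    · intro x hx
      exact hfm _ (h4 i (by omega) x hx)

theorem aux_basis (m : ℕ) (N : SubM m) (h0 : polyL0 m ≤ N)
    (f : KM m →ₗ[Polynomial ℂ] KM m) (hf : Function.Injective f)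
    (hfm : ∀ x ∈ N, f x ∈ polyL0 m) :
    Nonempty (N ≃ₗ[Polynomial ℂ] (Fin m → Polynomial ℂ)) := by
  let g : N →ₗ[Polynomial ℂ] (Fin m → Polynomial ℂ) :=
    (auxL0 m).symm.toLinearMap.comp (f.restrict hfm)
  have hg : Function.Injective g := by
    refine (auxL0 m).symm.injective.comp ?_
    intro x y h
    have := congrArg Subtype.val h
    exact Subtype.ext (hf this)
  let e : (Fin m → Polynomial ℂ) →ₗ[Polynomial ℂ] N :=
    (Submodule.inclusion h0).comp (auxL0 m).toLinearMap
  have he : Function.Injective e := 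
    (Submodule.inclusion_injective h0).comp (auxL0 m).injective
  have hfree : Module.Free (Polynomial ℂ) N :=
    Module.Free.of_equiv (LinearEquiv.ofInjective g hg).symm
  have hfin : Module.Finite (Polynomial ℂ) N := Module.Finite.of_injective g hg
  have r1 := LinearMap.finrank_le_finrank_of_injective hg
  have r2 := LinearMap.finrank_le_finrank_of_injective he
  exact ⟨LinearEquiv.ofFinrankEq _ _ (le_antisymm r1 r2)⟩

theorem aux_dim (m : ℕ) (w : ℂ) (N : SubM m)
    (e : N ≃ₗ[Polynomial ℂ] (Fin m → Polynomial ℂ)) :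
    fdim m N (N.comap (zmul m w)) = m := by
  let I : Ideal (Polynomial ℂ) := Ideal.span {X - C w}
  let P : SubM m := N.comap (zmul m w)
  let r : P →ₗ[Polynomial ℂ] N := (zmul m w).restrict (fun x hx => hx)
  let q : (Fin m → Polynomial ℂ) →ₗ[Polynomial ℂ] (Fin m → (Polynomial ℂ ⧸ I)) :=
    LinearMap.pi fun i => (Submodule.mkQ I).comp (LinearMap.proj i)
  let f : P →ₗ[Polynomial ℂ] (Fin m → (Polynomial ℂ ⧸ I)) := (q.comp e.toLinearMap).comp r
  have hr : Function.Surjective r := by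
    rintro ⟨y, hy⟩
    obtain ⟨x, rfl⟩ := aux_zmul_surj m w y
    exact ⟨⟨x, hy⟩, rfl⟩
  have hq : Function.Surjective q := by
    intro y
    choose z hz using fun i => Submodule.mkQ_surjective I (y i)
    exact ⟨z, funext hz⟩
  have hf : Function.Surjective f := (hq.comp e.surjective).comp hr
  have hker : N.comap P.subtype = LinearMap.ker f := by
    ext x
    rw [LinearMap.mem_ker, Submodule.mem_comap]
    constructor
    · intro hx
      have h1 : r x = (X - C w) • (⟨x.1, hx⟩ : N) := Subtype.ext (by simp [r, zmul])
      change q (e (r x)) = 0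
      rw [h1, map_smul]
      funext i
      change Submodule.Quotient.mk _ = _
      rw [Pi.zero_apply, Submodule.Quotient.mk_eq_zero]
      exact Ideal.mem_span_singleton.2 ⟨_, rfl⟩
    · intro hx
      have h1 : ∀ i, ∃ c, e (r x) i = (X - C w) * c := by
        intro i
        have h2 := congrFun (show q (e (r x)) = 0 from hx) i
        change Submodule.Quotient.mk _ = _ at h2
        rw [Pi.zero_apply, Submodule.Quotient.mk_eq_zero] at h2
        exact Ideal.mem_span_singleton.1 h2
      choose c hc using h1
      have h2 : r x = (X - C w) • e.symm c := by
        apply e.injective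
        rw [map_smul, e.apply_symm_apply]
        funext i
        simpa using hc i
      have h3 : zmul m w x.1 = zmul m w (e.symm c).1 := by
        have := congrArg Subtype.val h2
        simpa [r, zmul] using this
      have h4 := aux_zmul_inj m w h3
      change x.1 ∈ N
      rw [h4]
      exact (e.symm c).2
  let E : QuotMod m N P ≃ₗ[Polynomial ℂ] (Fin m → (Polynomial ℂ ⧸ I)) :=
    (Submodule.quotEquivOfEq _ _ hker).trans (f.quotKerEquivOfSurjective hf)
  have h1 : fdim m N P = Module.finrank ℂ (Fin m → (Polynomial ℂ ⧸ I)) :=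
    LinearEquiv.finrank_eq (E.restrictScalars ℂ)
  have h2 : Module.finrank ℂ (Fin m → (Polynomial ℂ ⧸ I)) = Module.finrank ℂ (Fin m → ℂ) :=
    LinearEquiv.finrank_eq (LinearEquiv.piCongrRight fun _ =>
      (Polynomial.quotientSpanXSubCAlgEquiv w).toLinearEquiv)
  change fdim m N P = m
  rw [h1, h2]; simp

/-- description of the fibre of the forgetful map
`Y(k₁,…,k_n)_(w₁,…,w_n) → Y(k₁,…,k_{n-1})_(w₁,…,w_{n-1})`. -/
theorem statement1 (m : ℕ) (hm : 2 ≤ m) (n : ℕ) (hn : 1 ≤ n)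
    (k : ℕ → ℕ) (w : ℕ → ℂ)
    (hk : ∀ j, 1 ≤ j → j ≤ n → 1 ≤ k j ∧ k j ≤ m - 1)
    (L : ℕ → SubM m)
    (hL : IsYChain m (n - 1) k w L)
    (P : SubM m) (hP : P = (L (n - 1)).comap (zmul m (w n))) :
    -- (a) any ℂ-subspace between L_{n-1} and P is an R-submodule
    (∀ S : Submodule ℂ (KM m),
        (L (n - 1) : Set (KM m)) ⊆ (S : Set (KM m)) →
        (S : Set (KM m)) ⊆ (P : Set (KM m)) →
        ∀ (p : Polynomial ℂ), ∀ x ∈ S, p • x ∈ S) ∧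
    -- (b) M completes the chain iff L_{n-1} ≤ M ≤ P and dim M/L_{n-1} = k_n
    (∀ M : SubM m,
        IsYChain m n k w (fun j => if j < n then L j else M) ↔
          (L (n - 1) ≤ M ∧ M ≤ P ∧ fdim m (L (n - 1)) M = k n)) ∧
    -- P/L_{n-1} is an m-dimensional ℂ-vector space
    fdim m (L (n - 1)) P = m ∧
    -- (c) the fibre is in bijection with the k_n-dimensional subspaces of P/L_{n-1}
    (Function.Injective
        (fun M : {M : SubM m //
            IsYChain m n k w (fun j => if j < n then L j else M)} =>
          Submodule.restrictScalars ℂ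
            (Submodule.map (Submodule.mkQ ((L (n - 1)).comap P.subtype))
              (M.1.comap P.subtype))) ∧
      ∀ V : Submodule ℂ (QuotMod m (L (n - 1)) P),
        (∃ M : {M : SubM m //
            IsYChain m n k w (fun j => if j < n then L j else M)},
          Submodule.restrictScalars ℂ
            (Submodule.map (Submodule.mkQ ((L (n - 1)).comap P.subtype))
              (M.1.comap P.subtype)) = V) ↔
          Module.finrank ℂ V = k n) := by
  have hfd : fdim m (L (n - 1)) P = m := by
    obtain ⟨h0, f, hf, hfm⟩ := aux_embed m (n - 1) k w L hL (n - 1) le_rfl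
    obtain ⟨e⟩ := aux_basis m _ h0 f hf hfm
    rw [hP]; exact aux_dim m (w n) _ e
  have hfin : FiniteDimensional ℂ (QuotMod m (L (n - 1)) P) :=
    Module.finite_of_finrank_pos (by unfold fdim at hfd; omega)
  have hLP : ∀ x ∈ P, zmul m (w n) x ∈ L (n - 1) := by
    intro x hx; rw [hP] at hx; exact hx
  have hNP : L (n - 1) ≤ P := by
    intro x hx; rw [hP]
    exact (L (n - 1)).smul_mem _ hx
  have hb : ∀ M : SubM m,
        IsYChain m n k w (fun j => if j < n then L j else M) ↔
          (L (n - 1) ≤ M ∧ M ≤ P ∧ fdim m (L (n - 1)) M = k n) := by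
    intro M
    have e1 : (if n - 1 < n then L (n - 1) else M) = L (n - 1) := if_pos (by omega)
    have e2 : (if n - 1 + 1 < n then L (n - 1 + 1) else M) = M := if_neg (by omega)
    have e3 : n - 1 + 1 = n := by omega
    constructor
    · rintro ⟨-, h1, -, h3, h4⟩
      have h1 := h1 (n - 1) (by omega)
      have h3 := h3 (n - 1) (by omega)
      have h4 := h4 (n - 1) (by omega)
      simp only [e1, e2] at h1 h3 h4
      rw [e3] at h3 h4
      exact ⟨h1, fun x hx => by rw [hP]; exact h4 x hx, h3⟩
    · rintro ⟨h1, h2, h3⟩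
      obtain ⟨g0, g1, g2, g3, g4⟩ := hL
      have key : ∀ i < n, (i < n - 1 ∧ (if i < n then L i else M) = L i ∧
          (if i + 1 < n then L (i + 1) else M) = L (i + 1)) ∨ i = n - 1 := by
        intro i hi
        by_cases h : i < n - 1
        · exact Or.inl ⟨h, if_pos hi, if_pos (by omega)⟩
        · right; omega
      refine ⟨?_, ?_, ?_, ?_, ?_⟩
      · simpa [show 0 < n by omega] using g0
      all_goals
        intro i hi
        rcases key i hi with ⟨a, b, c⟩ | rfl
      · simp only [b, c]; exact g1 i a
      · simp only [e1, e2]; exact h1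
      · exact aux_fin_congr m _ _ _ _ b c (g2 i a)
      · exact aux_fin_congr m _ _ _ _ e1 e2 (aux_fin m _ M P h2 hfin)
      · simp only [b, c]; exact g3 i a
      · simp only [e1, e2]; rw [e3]; exact h3
      · simp only [b, c]; exact g4 i a
      · simp only [e1, e2]; rw [e3]; exact fun x hx => hLP x (h2 hx)
  refine ⟨?_, hb, hfd, ?_, ?_⟩
  · intro S h1 h2 p x hx
    have h3 := h1 (aux_smul_mem m (w n) _ x (hLP x (h2 hx)) p)
    have h4 := S.add_mem h3 (S.smul_mem (p.eval (w n)) hx)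
    rwa [sub_add_cancel] at h4
  · have hrec : ∀ M : SubM m, L (n - 1) ≤ M → M ≤ P → ∀ x : KM m, x ∈ M ↔
        ∃ hx : x ∈ P, Submodule.mkQ ((L (n - 1)).comap P.subtype) ⟨x, hx⟩ ∈
          Submodule.restrictScalars ℂ
            (Submodule.map (Submodule.mkQ ((L (n - 1)).comap P.subtype))
              (M.comap P.subtype)) := by
      intro M h1 h2 x
      constructor
      · intro hx
        exact ⟨h2 hx, ⟨⟨x, h2 hx⟩, hx, rfl⟩⟩
      · rintro ⟨hx, ⟨y, hy, hyx⟩⟩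
        have h3 : y - ⟨x, hx⟩ ∈ (L (n - 1)).comap P.subtype := by
          rw [← Submodule.Quotient.eq]; exact hyx
        have h4 : y.1 - x ∈ M := h1 h3
        have h5 := M.sub_mem (show y.1 ∈ M from hy) h4
        rwa [sub_sub_cancel] at h5
    rintro ⟨M, hM⟩ ⟨M', hM'⟩ h
    obtain ⟨a1, a2, -⟩ := (hb M).1 hM
    obtain ⟨b1, b2, -⟩ := (hb M').1 hM'
    apply Subtype.ext
    dsimp only at h ⊢
    ext x
    rw [hrec M a1 a2, hrec M' b1 b2, h]
  · intro V
    constructor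
    · rintro ⟨⟨M, hM⟩, rfl⟩
      obtain ⟨a1, a2, a3⟩ := (hb M).1 hM
      rw [← a3]
      exact (aux_fdim m _ M P a2).symm
    · intro hV
      have hstab : ∀ (p : Polynomial ℂ) (v : QuotMod m (L (n - 1)) P), v ∈ V → p • v ∈ V := by
        intro p v hv
        have : p • v = (p.eval (w n)) • v := by
          obtain ⟨x, rfl⟩ := Submodule.mkQ_surjective _ v
          have h := aux_smul_mem m (w n) _ x.1 (hLP x.1 x.2) p
          change Submodule.Quotient.mk (p • x) = Submodule.Quotient.mk ((p.eval (w n)) • x)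
          rw [Submodule.Quotient.eq]
          exact h
        rw [this]
        exact V.smul_mem _ hv
      let V' : Submodule (Polynomial ℂ) (QuotMod m (L (n - 1)) P) :=
        { carrier := V
          add_mem' := fun ha hb => V.add_mem ha hb
          zero_mem' := V.zero_mem
          smul_mem' := fun p v hv => hstab p v hv }
      let M : SubM m := (V'.comap (Submodule.mkQ ((L (n - 1)).comap P.subtype))).map P.subtype
      have hMP : M ≤ P := Submodule.map_subtype_le _ _
      have hNM : L (n - 1) ≤ M := by
        intro x hx
        refine ⟨⟨x, hNP hx⟩, ?_, rfl⟩
        have : Submodule.mkQ ((L (n - 1)).comap P.subtype) ⟨x, hNP hx⟩ = 0 := by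
          rw [Submodule.mkQ_apply, Submodule.Quotient.mk_eq_zero]; exact hx
        change Submodule.mkQ _ _ ∈ V'
        rw [this]; exact V'.zero_mem
      have hMV : Submodule.restrictScalars ℂ
            (Submodule.map (Submodule.mkQ ((L (n - 1)).comap P.subtype))
              (M.comap P.subtype)) = V := by
        have h1 : M.comap P.subtype = V'.comap (Submodule.mkQ ((L (n - 1)).comap P.subtype)) :=
          Submodule.comap_map_eq_of_injective P.subtype_injective _
        rw [h1, Submodule.map_comap_eq_of_surjective (Submodule.mkQ_surjective _)]
        rfl
      refine ⟨⟨M, (hb M).2 ⟨hNM, hMP, ?_⟩⟩, hMV⟩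
      rw [aux_fdim m _ M P hMP, hMV, hV]
end
end

section
/- Let (L₀ ⊆ L₁ ⊆ ⋯ ⊆ L_n) ∈ Y(k̲)_w̲ and let 1 ≤ i ≤ n−1 with w_i ≠ w_{i+1}. Let T be the ℂ-linear endomorphism of V := L_{i+1}/L_{i−1} induced by multiplication by z. Then ker(T − w_i·id) = L_i/L_{i−1}, the space V decomposes as V = ker(T − w_i·id) ⊕ ker(T − w_{i+1}·id), and dim_ℂ ker(T − w_{i+1}·id) = k_{i+1}. -/
open Polynomial

set_option synthInstance.maxHeartbeats 1000000
set_option maxHeartbeats 1000000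

noncomputable section

theorem generic_aux {E : Type*} [AddCommGroup E] [Module ℂ E] [Module ℂ[X] E]
    [IsScalarTower ℂ ℂ[X] E] (A B M : Submodule ℂ[X] E) (hAB : A ≤ B)
    (a b : ℂ) (hw : a ≠ b) (hza : ∀ x ∈ B, (X - C a) • x ∈ A)
    (hzb : ∀ x ∈ M, (X - C b) • x ∈ B)
    (T : (↥M ⧸ (A.comap M.subtype)) →ₗ[ℂ] (↥M ⧸ (A.comap M.subtype)))
    (hT : ∀ v, T v = (X : ℂ[X]) • v) :
    LinearMap.ker (T - a • LinearMap.id) =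
      Submodule.restrictScalars ℂ
        (Submodule.map (Submodule.mkQ (A.comap M.subtype)) (B.comap M.subtype)) ∧
    IsCompl (LinearMap.ker (T - a • LinearMap.id)) (LinearMap.ker (T - b • LinearMap.id)) ∧
    Module.finrank ℂ ↥(LinearMap.ker (T - b • LinearMap.id)) =
      Module.finrank ℂ (↥M ⧸ (B.comap M.subtype)) := by
  have hab : a - b ≠ 0 := sub_ne_zero.mpr hw
  have key : ∀ (c : ℂ) (v : (↥M ⧸ (A.comap M.subtype))), (T - c • (LinearMap.id : _ →ₗ[ℂ] (↥M ⧸ (A.comap M.subtype)))) v = (X - C c) • v := by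
    intro c v
    have h : c • v = (C c : ℂ[X]) • v := by
      rw [← algebraMap_smul ℂ[X] c v]; rfl
    rw [sub_smul, ← h, ← hT]; rfl
  have memker : ∀ (c : ℂ) (x : M), (Submodule.Quotient.mk x : (↥M ⧸ (A.comap M.subtype))) ∈
      LinearMap.ker (T - c • LinearMap.id) ↔ (X - C c) • (x : E) ∈ A := by
    intro c x
    rw [LinearMap.mem_ker, key, ← Submodule.Quotient.mk_smul, Submodule.Quotient.mk_eq_zero]
    rfl
  have hid : (C (a - b)⁻¹ : ℂ[X]) * ((X - C b) - (X - C a)) = 1 := by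
    rw [sub_sub_sub_cancel_left, ← C_sub, ← C_mul, inv_mul_cancel₀ hab, C_1]
  have hB : ∀ x ∈ M, (X - C a) • x ∈ A → x ∈ B := by
    intro x hx h
    have h2 := B.smul_mem (C (a - b)⁻¹) (B.sub_mem (hzb x hx) (hAB h))
    rwa [← sub_smul, smul_smul, hid, one_smul] at h2
  have kerB : ∀ (x : M), (Submodule.Quotient.mk x : (↥M ⧸ (A.comap M.subtype))) ∈
      LinearMap.ker (T - a • LinearMap.id) ↔ (x : E) ∈ B := by
    intro x
    rw [memker]
    exact ⟨hB x x.2, hza x⟩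
  have hcompl : IsCompl (LinearMap.ker (T - a • LinearMap.id))
      (LinearMap.ker (T - b • LinearMap.id)) := by
    constructor
    · rw [Submodule.disjoint_def]
      intro v h1 h2
      rw [LinearMap.mem_ker, key] at h1 h2
      rw [← one_smul ℂ[X] v, ← hid, mul_smul, sub_smul, h1, h2, sub_zero, smul_zero]
    · rw [codisjoint_iff, eq_top_iff]
      rintro v -
      obtain ⟨x, rfl⟩ := Submodule.Quotient.mk_surjective _ v
      rw [Submodule.mem_sup]
      refine ⟨Submodule.Quotient.mk
          ⟨(C (a - b)⁻¹ * (X - C b)) • (x : E), M.smul_mem _ x.2⟩, ?_,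
        Submodule.Quotient.mk
          ⟨(-(C (a - b)⁻¹ * (X - C a))) • (x : E), M.smul_mem _ x.2⟩, ?_, ?_⟩
      · rw [kerB]
        have := B.smul_mem (C (a - b)⁻¹) (hzb x x.2)
        rwa [smul_smul] at this
      · rw [memker]
        have := A.neg_mem (A.smul_mem (C (a - b)⁻¹) (hza _ (hzb x x.2)))
        rw [smul_smul, smul_smul, ← neg_smul] at this
        change (X - C b) • ((-(C (a - b)⁻¹ * (X - C a))) • (x : E)) ∈ A
        rw [smul_smul]
        convert this using 2
        ring
      · rw [← Submodule.Quotient.mk_add]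
        congr 1
        apply Subtype.ext
        change (C (a - b)⁻¹ * (X - C b)) • (x : E) + (-(C (a - b)⁻¹ * (X - C a))) • (x : E) = x
        rw [← add_smul, ← sub_eq_add_neg, ← mul_sub, hid, one_smul]
  refine ⟨?_, hcompl, ?_⟩
  · ext v
    obtain ⟨x, rfl⟩ := Submodule.Quotient.mk_surjective _ v
    rw [kerB, Submodule.restrictScalars_mem, Submodule.mem_map]
    constructor
    · intro h
      exact ⟨x, h, rfl⟩
    · rintro ⟨y, hy, hyx⟩
      rw [Submodule.mkQ_apply, Submodule.Quotient.eq] at hyx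
      have h3 := B.sub_mem hy (hAB hyx)
      simpa using h3
  · have hle : A.comap M.subtype ≤ B.comap M.subtype := fun x hx => hAB hx
    let f : (↥M ⧸ (A.comap M.subtype)) →ₗ[ℂ[X]] (↥M ⧸ (B.comap M.subtype)) :=
      Submodule.factor hle
    have hf : Function.Surjective (f.restrictScalars ℂ) :=
      Submodule.factor_surjective hle
    have hker : LinearMap.ker (T - a • LinearMap.id) = LinearMap.ker (f.restrictScalars ℂ) := by
      ext v
      obtain ⟨x, rfl⟩ := Submodule.Quotient.mk_surjective _ v
      rw [kerB, LinearMap.mem_ker]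
      exact (Submodule.Quotient.mk_eq_zero (B.comap M.subtype) (x := x)).symm
    rw [hker] at hcompl
    exact ((Submodule.quotientEquivOfIsCompl _ _ hcompl).symm.trans
      ((f.restrictScalars ℂ).quotKerEquivOfSurjective hf)).finrank_eq

/-- eigenspace decomposition of `L_{i+1}/L_{i-1}` under the endomorphism
induced by multiplication by `z`, when `w_i ≠ w_{i+1}`. -/
theorem statement2 (m : ℕ) (hm : 2 ≤ m) (n : ℕ) (k : ℕ → ℕ) (w : ℕ → ℂ)
    (hk : ∀ j, 1 ≤ j → j ≤ n → 1 ≤ k j ∧ k j ≤ m - 1)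
    (L : ℕ → SubM m) (hL : IsYChain m n k w L)
    (i : ℕ) (hi : 1 ≤ i) (hin : i + 1 ≤ n) (hw : w i ≠ w (i + 1))
    (T : QuotMod m (L (i - 1)) (L (i + 1)) →ₗ[ℂ] QuotMod m (L (i - 1)) (L (i + 1)))
    (hT : T = quotSmul m Polynomial.X (L (i - 1)) (L (i + 1))) :
    -- ker(T - w_i) = L_i/L_{i-1}
    LinearMap.ker (T - w i • LinearMap.id) =
      Submodule.restrictScalars ℂ
        (Submodule.map (Submodule.mkQ ((L (i - 1)).comap (L (i + 1)).subtype))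
          ((L i).comap (L (i + 1)).subtype)) ∧
    -- V = ker(T - w_i) ⊕ ker(T - w_{i+1})
    IsCompl (LinearMap.ker (T - w i • LinearMap.id))
      (LinearMap.ker (T - w (i + 1) • LinearMap.id)) ∧
    -- dim ker(T - w_{i+1}) = k_{i+1}
    Module.finrank ℂ ↥(LinearMap.ker (T - w (i + 1) • LinearMap.id)) = k (i + 1) := by
  obtain ⟨-, hle, -, hdim, hz⟩ := hL
  obtain ⟨j, rfl⟩ : ∃ j, i = j + 1 := ⟨i - 1, by omega⟩
  have e1 : j + 1 - 1 = j := rfl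
  have hAB : L (j + 1 - 1) ≤ L (j + 1) := hle j (by omega)
  have hBM : L (j + 1) ≤ L (j + 1 + 1) := hle (j + 1) (by omega)
  have hd : fdim m (L (j + 1)) (L (j + 1 + 1)) = k (j + 1 + 1) := hdim (j + 1) (by omega)
  have hza : ∀ x ∈ L (j + 1), (X - C (w (j + 1))) • x ∈ L (j + 1 - 1) := hz j (by omega)
  have hzb : ∀ x ∈ L (j + 1 + 1), (X - C (w (j + 1 + 1))) • x ∈ L (j + 1) :=
    hz (j + 1) (by omega)
  clear hz hdim hle
  generalize w (j + 1) = a at *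
  generalize w (j + 1 + 1) = b at *
  generalize L (j + 1 - 1) = A at *
  generalize L (j + 1 + 1) = M at *
  generalize L (j + 1) = B at *
  rw [← hd]
  exact generic_aux A B M hAB a b hw hza hzb T (fun v => by rw [hT]; rfl)
end
end

section
/- Let (L₀ ⊆ L₁ ⊆ ⋯ ⊆ L_n) ∈ Y(k̲)_w̲ and let 1 ≤ i ≤ n−1 with w_i ≠ w_{i+1}. Then M := {x ∈ L_{i+1} : (z − w_{i+1})·x ∈ L_{i−1}} is the unique R-submodule of K^m satisfying: L_{i−1} ⊆ M ⊆ L_{i+1}, dim_ℂ(M/L_{i−1}) = k_{i+1}, (z − w_{i+1})·M ⊆ L_{i−1}, and (z − w_i)·L_{i+1} ⊆ M. In particular, the chain obtained from (L_•) by replacing L_i with M is a point of Y(s_i·k̲)_{s_i·w̲}. -/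
open Polynomial

set_option synthInstance.maxHeartbeats 1000000
set_option maxHeartbeats 1000000

noncomputable section

/-- `s_i` : exchanging the `i`-th and `(i+1)`-st entries of a sequence. -/
def swapAt {α : Type*} (i : ℕ) (f : ℕ → α) : ℕ → α :=
  fun j => if j = i then f (i + 1) else if j = i + 1 then f i else f j

theorem mem_of_zmul (m : ℕ) (N : SubM m) {a b : ℂ} (hab : a ≠ b) (x : KM m)
    (ha : zmul m a x ∈ N) (hb : zmul m b x ∈ N) : x ∈ N := by
  have h : x = (C (a - b)⁻¹ : Polynomial ℂ) • (zmul m b x - zmul m a x) := by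
    have h2 : (C (a - b)⁻¹ : Polynomial ℂ) * ((X - C b) - (X - C a)) = 1 := by
      have : (X - C b : Polynomial ℂ) - (X - C a) = C (a - b) := by
        rw [C_sub]; ring
      rw [this, ← C_mul, inv_mul_cancel₀ (sub_ne_zero.2 hab), C_1]
    simp only [zmul, LinearMap.smul_apply, LinearMap.id_apply]
    rw [← sub_smul, smul_smul, h2, one_smul]
  rw [h]
  exact N.smul_mem _ (N.sub_mem hb ha)

theorem zmul_mem (m : ℕ) (N : SubM m) (a : ℂ) (x : KM m) (hx : x ∈ N) : zmul m a x ∈ N :=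
  N.smul_mem _ hx

theorem zmul_zmul_comm (m : ℕ) (a b : ℂ) (x : KM m) :
    zmul m a (zmul m b x) = zmul m b (zmul m a x) := by
  simp only [zmul, LinearMap.smul_apply, LinearMap.id_apply]
  exact smul_comm _ _ _

theorem quot_equiv (m : ℕ) (A B M D : SubM m) (h1 : M ⊓ B = A) (h2 : M ⊔ B = D) :
    Nonempty (QuotMod m A M ≃ₗ[ℂ] QuotMod m B D) := by
  subst h1 h2
  exact ⟨(LinearMap.quotientInfEquivSupQuotient M B).restrictScalars ℂ⟩

theorem fd_congr (m : ℕ) {A B A' B' : SubM m} (hA : A' = A) (hB : B' = B)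
    (h : FiniteDimensional ℂ (QuotMod m A B)) : FiniteDimensional ℂ (QuotMod m A' B') := by
  subst hA hB
  exact h

/-- when `w_i ≠ w_{i+1}`, `M = {x ∈ L_{i+1} : (z-w_{i+1})x ∈ L_{i-1}}` is the
unique `R`-submodule fitting between `L_{i-1}` and `L_{i+1}` with the stated properties,
and replacing `L_i` by `M` gives a point of `Y(s_i·k)_{s_i·w}`. -/
theorem statement3 (m : ℕ) (hm : 2 ≤ m) (n : ℕ) (k : ℕ → ℕ) (w : ℕ → ℂ)
    (hk : ∀ j, 1 ≤ j → j ≤ n → 1 ≤ k j ∧ k j ≤ m - 1)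
    (L : ℕ → SubM m) (hL : IsYChain m n k w L)
    (i : ℕ) (hi : 1 ≤ i) (hin : i + 1 ≤ n) (hw : w i ≠ w (i + 1))
    (M : SubM m)
    (hM : M = L (i + 1) ⊓ (L (i - 1)).comap (zmul m (w (i + 1)))) :
    -- M satisfies the four conditions
    (L (i - 1) ≤ M ∧ M ≤ L (i + 1) ∧
      fdim m (L (i - 1)) M = k (i + 1) ∧
      (∀ x ∈ M, zmul m (w (i + 1)) x ∈ L (i - 1)) ∧
      (∀ x ∈ L (i + 1), zmul m (w i) x ∈ M)) ∧
    -- M is the unique such R-submodule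
    (∀ M' : SubM m,
        L (i - 1) ≤ M' → M' ≤ L (i + 1) →
        fdim m (L (i - 1)) M' = k (i + 1) →
        (∀ x ∈ M', zmul m (w (i + 1)) x ∈ L (i - 1)) →
        (∀ x ∈ L (i + 1), zmul m (w i) x ∈ M') → M' = M) ∧
    -- replacing L_i by M gives a point of Y(s_i·k)_{s_i·w}
    IsYChain m n (swapAt i k) (swapAt i w) (fun j => if j = i then M else L j) := by
  obtain ⟨h0, hle, hfin, hdim, hz⟩ := hL
  obtain ⟨j, rfl⟩ : ∃ j, i = j + 1 := ⟨i - 1, by omega⟩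
  simp only [Nat.add_sub_cancel] at hM ⊢
  have hAB := hle j (by omega)
  have hBC := hle (j + 1) (by omega)
  have hzB := hz j (by omega)
  have hzC := hz (j + 1) (by omega)
  have hAM : L j ≤ M := by
    rw [hM]
    exact fun x hx => ⟨hBC (hAB hx), zmul_mem m _ _ x hx⟩
  have hMC : M ≤ L (j + 1 + 1) := by rw [hM]; exact inf_le_left
  have hzM : ∀ x ∈ M, zmul m (w (j + 1 + 1)) x ∈ L j := by
    rw [hM]; exact fun x hx => hx.2
  have hCM : ∀ x ∈ L (j + 1 + 1), zmul m (w (j + 1)) x ∈ M := by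
    intro x hx
    rw [hM]
    refine ⟨zmul_mem m _ _ x hx, ?_⟩
    change zmul m _ (zmul m _ x) ∈ L j
    rw [zmul_zmul_comm]
    exact hzB _ (hzC x hx)
  have hinf : M ⊓ L (j + 1) = L j := by
    refine le_antisymm (fun x hx => ?_) (le_inf hAM hAB)
    exact mem_of_zmul m _ hw x (hzB x hx.2) (hzM x hx.1)
  have hsup : M ⊔ L (j + 1) = L (j + 1 + 1) := by
    refine le_antisymm (sup_le hMC hBC) (fun x hx => ?_)
    exact mem_of_zmul m _ hw x ((le_sup_left : M ≤ _) (hCM x hx))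
      ((le_sup_right : L (j + 1) ≤ _) (hzC x hx))
  obtain ⟨e1⟩ := quot_equiv m _ _ _ _ hinf hsup
  obtain ⟨e2⟩ := quot_equiv m _ _ _ _ (inf_comm M _ ▸ hinf) (sup_comm M _ ▸ hsup)
  have hd1 : fdim m (L j) M = k (j + 1 + 1) := by
    rw [← hdim (j + 1) (by omega)]; exact e1.finrank_eq
  have hd2 : fdim m M (L (j + 1 + 1)) = k (j + 1) := by
    rw [← hdim j (by omega)]; exact e2.finrank_eq.symm
  have hf1 : FiniteDimensional ℂ (QuotMod m (L j) M) := by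
    have := hfin (j + 1) (by omega)
    exact Module.Finite.equiv e1.symm
  have hf2 : FiniteDimensional ℂ (QuotMod m M (L (j + 1 + 1))) := by
    have := hfin j (by omega)
    exact Module.Finite.equiv e2
  refine ⟨⟨hAM, hMC, hd1, hzM, hCM⟩, ?_, ?_⟩
  · intro M' h1 h2 _ h4 h5
    refine le_antisymm (fun x hx => ?_) (fun x hx => ?_)
    · rw [hM]; exact ⟨h2 hx, h4 x hx⟩
    · exact mem_of_zmul m _ hw x (h5 x (hMC hx)) (h1 (hzM x hx))
  · have key : ∀ l < n, (l = j ∨ l = j + 1 ∨ (l ≠ j ∧ l ≠ j + 1)) := by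
      intro l _; omega
    refine ⟨by simpa using h0, ?_, ?_, ?_, ?_⟩ <;> intro l hl <;>
      rcases key l hl with rfl | rfl | ⟨ha, hb⟩
    · simpa using hAM
    · simpa using hMC
    · simpa [ha, hb] using hle l hl
    · exact fd_congr m (by simp) (by simp) hf1
    · exact fd_congr m (by simp) (by simp) hf2
    · exact fd_congr m (by simp [hb]) (by simp [ha]) (hfin l hl)
    · simpa [swapAt] using hd1
    · simpa [swapAt] using hd2
    · simpa [swapAt, ha, hb] using hdim l hl
    · simpa [swapAt] using hzM
    · simpa [swapAt] using hCM
    · simpa [swapAt, ha, hb] using hz l hl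
end
end

section
/- Suppose 1 ≤ i ≤ n−1 and w_i = w_{i+1} =: w. For every ((L_•),(L'_•)) ∈ Z(k̲)^i_w̲, the subspace (L_i + L'_i)/L_{i−1} of L_{i+1}/L_{i−1} is contained in the kernel of the endomorphism of L_{i+1}/L_{i−1} induced by multiplication by (z − w); consequently dim_ℂ ker((z−w)|_{L_{i+1}/L_{i−1}}) + dim_ℂ((L_i ∩ L'_i)/L_{i−1}) ≥ k_i + k_{i+1}. -/
open Polynomial

set_option synthInstance.maxHeartbeats 1000000
set_option maxHeartbeats 1000000

noncomputable section

/-- The correspondence `Z(k)^i_w ⊆ Y(k)_w × Y(s_i·k)_{s_i·w}`. -/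
def IsZPair (m n i : ℕ) (k : ℕ → ℕ) (w : ℕ → ℂ) (L L' : ℕ → SubM m) : Prop :=
  IsYChain m n k w L ∧ IsYChain m n (swapAt i k) (swapAt i w) L' ∧
  ∀ j, j ≠ i → L j = L' j


def incQ (m : ℕ) (A P B : SubM m) (h : P ≤ B) : QuotMod m A P →ₗ[Polynomial ℂ] QuotMod m A B :=
  Submodule.mapQ _ _ (Submodule.inclusion h) (fun _ hx => hx)

def projQ (m : ℕ) (A P B : SubM m) (h : A ≤ P) : QuotMod m A B →ₗ[Polynomial ℂ] QuotMod m P B :=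
  Submodule.mapQ _ _ LinearMap.id (fun _ hx => h hx)

lemma incQ_injective (m : ℕ) (A P B : SubM m) (h : P ≤ B) :
    Function.Injective (incQ m A P B h) := by
  rw [← LinearMap.ker_eq_bot, LinearMap.ker_eq_bot']
  intro x hx
  obtain ⟨x, rfl⟩ := Submodule.Quotient.mk_surjective _ x
  have h1 : (Submodule.Quotient.mk (Submodule.inclusion h x) : QuotMod m A B) = 0 := hx
  rw [Submodule.Quotient.mk_eq_zero] at h1 ⊢
  exact h1

/-- The image of `P / A` in `B / A`, as a complex subspace. -/
def imgQ (m : ℕ) (A P B : SubM m) : Submodule ℂ (QuotMod m A B) :=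
  Submodule.restrictScalars ℂ
    (Submodule.map (Submodule.mkQ (A.comap B.subtype)) (P.comap B.subtype))

lemma mk_mem_imgQ (m : ℕ) (A P B : SubM m) (hA : A ≤ P) (x : B) :
    (Submodule.Quotient.mk x : QuotMod m A B) ∈ imgQ m A P B ↔ (x : KM m) ∈ P := by
  constructor
  · rintro ⟨y, hy, hxy⟩
    have h1 : (Submodule.Quotient.mk y : QuotMod m A B) = Submodule.Quotient.mk x := hxy
    rw [Submodule.Quotient.eq] at h1
    have h2 : (y : KM m) - x ∈ A := h1
    have h3 : (y : KM m) ∈ P := hy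
    have := P.sub_mem h3 (hA h2)
    simpa using this
  · intro hx
    exact ⟨x, hx, rfl⟩

lemma range_incQ (m : ℕ) (A P B : SubM m) (hA : A ≤ P) (h : P ≤ B) :
    LinearMap.range ((incQ m A P B h).restrictScalars ℂ) = imgQ m A P B := by
  ext x
  obtain ⟨x, rfl⟩ := Submodule.Quotient.mk_surjective _ x
  rw [mk_mem_imgQ m A P B hA]
  constructor
  · rintro ⟨y, hy⟩
    obtain ⟨y, rfl⟩ := Submodule.Quotient.mk_surjective _ y
    rw [← mk_mem_imgQ m A P B hA, ← hy]
    exact (mk_mem_imgQ m A P B hA (Submodule.inclusion h y)).2 y.2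
  · intro hx
    exact ⟨Submodule.Quotient.mk ⟨x, hx⟩, rfl⟩

lemma finrank_imgQ (m : ℕ) (A P B : SubM m) (hA : A ≤ P) (h : P ≤ B) :
    Module.finrank ℂ (imgQ m A P B) = fdim m A P := by
  rw [← range_incQ m A P B hA h]
  exact LinearMap.finrank_range_of_inj (f := (incQ m A P B h).restrictScalars ℂ)
    (incQ_injective m A P B h)

lemma finite_quot (m : ℕ) (A P B : SubM m) (hA : A ≤ P) (h : P ≤ B)
    (h1 : FiniteDimensional ℂ (QuotMod m A P)) (h2 : FiniteDimensional ℂ (QuotMod m P B)) :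
    FiniteDimensional ℂ (QuotMod m A B) := by
  have hk : LinearMap.ker ((projQ m A P B hA).restrictScalars ℂ) = imgQ m A P B := by
    ext x
    obtain ⟨x, rfl⟩ := Submodule.Quotient.mk_surjective _ x
    rw [mk_mem_imgQ m A P B hA]
    change (Submodule.Quotient.mk x : QuotMod m P B) = 0 ↔ _
    rw [Submodule.Quotient.mk_eq_zero]
    rfl
  have f1 : FiniteDimensional ℂ (imgQ m A P B) := by
    rw [← range_incQ m A P B hA h]
    infer_instance
  have f2 : FiniteDimensional ℂ
      (QuotMod m A B ⧸ LinearMap.ker ((projQ m A P B hA).restrictScalars ℂ)) :=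
    Module.Finite.equiv
      ((projQ m A P B hA).restrictScalars ℂ).quotKerEquivRange.symm
  rw [hk] at f2
  exact Module.Finite.of_submodule_quotient (imgQ m A P B)

lemma imgQ_le_ker (m : ℕ) (A P B : SubM m) (hA : A ≤ P) (w : ℂ)
    (hz : ∀ x ∈ P, zmul m w x ∈ A) :
    imgQ m A P B ≤ LinearMap.ker (quotSmul m (Polynomial.X - Polynomial.C w) A B) := by
  intro x hx
  obtain ⟨x, rfl⟩ := Submodule.Quotient.mk_surjective _ x
  rw [mk_mem_imgQ m A P B hA] at hx
  change (Submodule.Quotient.mk ((Polynomial.X - Polynomial.C w) • x) : QuotMod m A B) = 0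
  rw [Submodule.Quotient.mk_eq_zero]
  exact hz _ hx

/-- when `w_i = w_{i+1} = w`, for any point of `Z(k)^i_w` the subspace
`(L_i + L'_i)/L_{i-1}` of `L_{i+1}/L_{i-1}` lies in the kernel of the endomorphism
induced by multiplication by `z - w`; consequently
`dim ker((z-w)|_{L_{i+1}/L_{i-1}}) + dim((L_i ∩ L'_i)/L_{i-1}) ≥ k_i + k_{i+1}`. -/
theorem statement7 (m : ℕ) (hm : 2 ≤ m) (n : ℕ) (k : ℕ → ℕ) (w : ℕ → ℂ)
    (hk : ∀ j, 1 ≤ j → j ≤ n → 1 ≤ k j ∧ k j ≤ m - 1)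
    (i : ℕ) (hi : 1 ≤ i) (hin : i + 1 ≤ n) (hww : w i = w (i + 1))
    (L L' : ℕ → SubM m) (hZ : IsZPair m n i k w L L') :
    Submodule.restrictScalars ℂ
        (Submodule.map (Submodule.mkQ ((L (i - 1)).comap (L (i + 1)).subtype))
          ((L i ⊔ L' i).comap (L (i + 1)).subtype)) ≤
      LinearMap.ker
        (quotSmul m (Polynomial.X - Polynomial.C (w i)) (L (i - 1)) (L (i + 1))) ∧
    k i + k (i + 1) ≤
      Module.finrank ℂ
          ↥(LinearMap.ker
            (quotSmul m (Polynomial.X - Polynomial.C (w i)) (L (i - 1)) (L (i + 1)))) +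
        fdim m (L (i - 1)) (L i ⊓ L' i) := by
  obtain ⟨j, rfl⟩ : ∃ j, i = j + 1 := ⟨i - 1, by omega⟩
  obtain ⟨⟨-, hle, hfd, hdim, hz⟩, ⟨-, hle', hfd', hdim', hz'⟩, heq⟩ := hZ
  simp only [Nat.add_sub_cancel]
  have e0 : L j = L' j := heq j (by omega)
  have e2 : L (j + 1 + 1) = L' (j + 1 + 1) := heq _ (by omega)
  have a1 := hle j (by omega)
  have a2 := hle (j + 1) (by omega)
  have b1 := hle' j (by omega)
  have b2 := hle' (j + 1) (by omega)
  have d1 := hdim j (by omega)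
  have d1' := hdim' j (by omega)
  have z1 := hz j (by omega)
  have z1' := hz' j (by omega)
  have f1 := hfd j (by omega)
  have f2 := hfd (j + 1) (by omega)
  rw [← e0] at b1 d1' z1'
  rw [← e2] at b2
  have s1 : swapAt (j + 1) k (j + 1) = k (j + 1 + 1) := by simp [swapAt]
  have s2 : swapAt (j + 1) w (j + 1) = w (j + 1) := by simp [swapAt, hww]
  rw [s1] at d1'
  rw [s2] at z1'
  have hsup : ∀ x ∈ L (j + 1) ⊔ L' (j + 1), zmul m (w (j + 1)) x ∈ L j := by
    intro x hx
    obtain ⟨y, hy, y', hy', rfl⟩ := Submodule.mem_sup.1 hx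
    rw [map_add]
    exact (L j).add_mem (z1 y hy) (z1' y' hy')
  have hker := imgQ_le_ker m (L j) (L (j + 1) ⊔ L' (j + 1)) (L (j + 1 + 1))
    (a1.trans le_sup_left) (w (j + 1)) hsup
  refine ⟨hker, ?_⟩
  have hF := finite_quot m _ _ _ a1 a2 f1 f2
  have g1 := finrank_imgQ m _ _ _ a1 a2
  have g2 := finrank_imgQ m _ _ _ b1 b2
  have g3 := finrank_imgQ m _ _ _ (le_inf a1 b1) (inf_le_left.trans a2)
  have hinf : imgQ m (L j) (L (j + 1)) (L (j + 1 + 1)) ⊓ imgQ m (L j) (L' (j + 1)) (L (j + 1 + 1))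
      = imgQ m (L j) (L (j + 1) ⊓ L' (j + 1)) (L (j + 1 + 1)) := by
    ext x
    obtain ⟨x, rfl⟩ := Submodule.Quotient.mk_surjective _ x
    rw [Submodule.mem_inf, mk_mem_imgQ m _ _ _ a1, mk_mem_imgQ m _ _ _ b1,
      mk_mem_imgQ m _ _ _ (le_inf a1 b1), Submodule.mem_inf]
  have hs := Submodule.finrank_sup_add_finrank_inf_eq
    (imgQ m (L j) (L (j + 1)) (L (j + 1 + 1))) (imgQ m (L j) (L' (j + 1)) (L (j + 1 + 1)))
  have hle2 := Submodule.finrank_mono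
    (sup_le (imgQ_le_ker m (L j) (L (j + 1)) (L (j + 1 + 1)) a1 (w (j + 1)) z1)
      (imgQ_le_ker m (L j) (L' (j + 1)) (L (j + 1 + 1)) b1 (w (j + 1)) z1'))
  rw [hinf, g1, g2, g3, d1, d1'] at hs
  rw [← hs]
  exact Nat.add_le_add_right hle2 _
end
end

section
/- Suppose 1 ≤ i ≤ n−1, w_i = w_{i+1} =: w and k_i ≤ k_{i+1}, and set N := min(k_i+k_{i+1}, m). Then for every point ((L_•),(L'_•)) ∈ Z(k̲)^i_w̲ one has k_{i+1} ≤ dim_ℂ ker((z−w)|_{L_{i+1}/L_{i−1}}) ≤ N. Consequently Z(k̲)^i_w̲ is the union of the subsets Z_s(k̲)^i_w̲ for s = 0, 1, …, N − k_{i+1}. -/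
open Polynomial

set_option synthInstance.maxHeartbeats 1000000
set_option maxHeartbeats 1000000

noncomputable section

/-- The map `B/A → C/A` induced by an inclusion `B ≤ C`. -/
def quotIncl (m : ℕ) (A B C : SubM m) (h : B ≤ C) : QuotMod m A B →ₗ[ℂ] QuotMod m A C :=
  (Submodule.mapQ (A.comap B.subtype) (A.comap C.subtype) (Submodule.inclusion h)
    (fun _ hx => hx)).restrictScalars ℂ

/-- The map `C/A → C/B` induced by an inclusion `A ≤ B`. -/
def quotProj (m : ℕ) (A B C : SubM m) (h : A ≤ B) : QuotMod m A C →ₗ[ℂ] QuotMod m B C :=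
  (Submodule.mapQ (A.comap C.subtype) (B.comap C.subtype) LinearMap.id
    (fun _ hx => h hx)).restrictScalars ℂ

theorem quotIncl_mk (m : ℕ) (A B C : SubM m) (h : B ≤ C) (x : B) :
    quotIncl m A B C h (Submodule.Quotient.mk x) =
      Submodule.Quotient.mk (Submodule.inclusion h x) := rfl

theorem quotProj_mk (m : ℕ) (A B C : SubM m) (h : A ≤ B) (x : C) :
    quotProj m A B C h (Submodule.Quotient.mk x) = Submodule.Quotient.mk x := rfl

theorem quotIncl_injective (m : ℕ) (A B C : SubM m) (h : B ≤ C) :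
    Function.Injective (quotIncl m A B C h) := by
  rw [injective_iff_map_eq_zero]
  intro v hv
  obtain ⟨x, rfl⟩ := Submodule.Quotient.mk_surjective _ v
  rw [quotIncl_mk, Submodule.Quotient.mk_eq_zero] at hv
  rw [Submodule.Quotient.mk_eq_zero]
  exact hv

theorem quotProj_surjective (m : ℕ) (A B C : SubM m) (h : A ≤ B) :
    Function.Surjective (quotProj m A B C h) := by
  intro v
  obtain ⟨x, rfl⟩ := Submodule.Quotient.mk_surjective _ v
  exact ⟨Submodule.Quotient.mk x, rfl⟩

theorem quot_exact (m : ℕ) (A B C : SubM m) (hAB : A ≤ B) (hBC : B ≤ C) :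
    LinearMap.ker (quotProj m A B C hAB) = LinearMap.range (quotIncl m A B C hBC) := by
  ext v
  obtain ⟨x, rfl⟩ := Submodule.Quotient.mk_surjective _ v
  rw [LinearMap.mem_ker, quotProj_mk, Submodule.Quotient.mk_eq_zero]
  constructor
  · intro hx
    exact ⟨Submodule.Quotient.mk ⟨x.1, hx⟩, rfl⟩
  · rintro ⟨u, hu⟩
    obtain ⟨y, rfl⟩ := Submodule.Quotient.mk_surjective _ u
    rw [quotIncl_mk, Submodule.Quotient.eq] at hu
    have h1 : (y : KM m) - x ∈ A := hu
    have h2 := B.sub_mem y.2 (hAB h1)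
    simpa using h2

theorem quot_finite (m : ℕ) (A B C : SubM m) (hAB : A ≤ B) (hBC : B ≤ C)
    (h1 : FiniteDimensional ℂ (QuotMod m A B)) (h2 : FiniteDimensional ℂ (QuotMod m B C)) :
    FiniteDimensional ℂ (QuotMod m A C) ∧ fdim m A C = fdim m A B + fdim m B C := by
  have hf : FiniteDimensional ℂ (QuotMod m A C) := by
    refine Module.Finite.of_exact (f := quotIncl m A B C hBC) (g := quotProj m A B C hAB) ?_ ?_
    · rw [LinearMap.exact_iff]; exact quot_exact m A B C hAB hBC
    · exact quotProj_surjective m A B C hAB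
  refine ⟨hf, ?_⟩
  have h := LinearMap.finrank_range_add_finrank_ker (quotProj m A B C hAB)
  rw [quot_exact m A B C hAB hBC,
    LinearMap.finrank_range_of_inj (quotIncl_injective m A B C hBC),
    LinearMap.range_eq_top.2 (quotProj_surjective m A B C hAB), finrank_top] at h
  unfold fdim
  omega

theorem range_le_ker (m : ℕ) (w : ℂ) (A B C : SubM m) (hBC : B ≤ C)
    (h : ∀ x ∈ B, zmul m w x ∈ A) :
    LinearMap.range (quotIncl m A B C hBC) ≤
      LinearMap.ker (quotSmul m (X - Polynomial.C w) A C) := by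
  rintro _ ⟨u, rfl⟩
  obtain ⟨y, rfl⟩ := Submodule.Quotient.mk_surjective _ u
  rw [quotIncl_mk, LinearMap.mem_ker]
  change Submodule.Quotient.mk ((X - Polynomial.C w) • Submodule.inclusion hBC y) = _
  rw [Submodule.Quotient.mk_eq_zero]
  exact h y y.2

theorem exists_primitive (m : ℕ) (w : ℂ) (y : Fin (m + 1) → KM m) :
    ∃ p : Fin (m + 1) → ℂ[X], ∑ j, p j • y j = 0 ∧ ∃ j, (p j).eval w ≠ 0 := by
  have hdep : ¬ LinearIndependent ℂ[X] y := by
    rw [LinearIndependent.iff_fractionRing (R := ℂ[X]) (K := RatFunc ℂ)]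
    intro h
    have := h.fintype_card_le_finrank
    simp at this
  rw [Fintype.not_linearIndependent_iff] at hdep
  obtain ⟨g, hg, j0, hj0⟩ := hdep
  obtain ⟨p, hp, hgcd⟩ := Finset.extract_gcd g (s := Finset.univ) Finset.univ_nonempty
  have hne : Finset.univ.gcd g ≠ 0 := by
    intro h
    rw [Finset.gcd_eq_zero_iff] at h
    exact hj0 (h j0 (Finset.mem_univ _))
  refine ⟨p, ?_, ?_⟩
  · have : Finset.univ.gcd g • ∑ j, p j • y j = 0 := by
      rw [Finset.smul_sum, ← hg]
      refine Finset.sum_congr rfl fun j _ => ?_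
      rw [smul_smul, ← hp j (Finset.mem_univ _)]
    funext t
    have ht := congrFun this t
    rw [Pi.smul_apply, Algebra.smul_def, Pi.zero_apply, mul_eq_zero] at ht
    refine ht.resolve_left fun h0 => hne ?_
    exact (IsFractionRing.injective ℂ[X] (RatFunc ℂ)) (h0.trans (map_zero _).symm)
  · by_contra! hall
    have hdvd : (X - Polynomial.C w) ∣ Finset.univ.gcd p :=
      Finset.dvd_gcd fun j _ => Polynomial.dvd_iff_isRoot.2 (hall j)
    rw [hgcd] at hdvd
    exact Polynomial.not_isUnit_X_sub_C w (isUnit_of_dvd_one hdvd)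

theorem ker_le (m : ℕ) (w : ℂ) (A C : SubM m) :
    Module.finrank ℂ (LinearMap.ker (quotSmul m (X - Polynomial.C w) A C)) ≤ m := by
  by_contra! hlt
  obtain ⟨f, hf⟩ := exists_linearIndependent_of_le_finrank (R := ℂ) (Nat.succ_le_of_lt hlt)
  have hf' := hf.map' (Submodule.subtype _) (Submodule.ker_subtype _)
  choose y hy using fun j => Submodule.Quotient.mk_surjective _ (f j).1
  have hyA : ∀ j, (X - Polynomial.C w) • (y j : KM m) ∈ A := by
    intro j
    have h := (f j).2
    rw [LinearMap.mem_ker, ← hy j] at h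
    change Submodule.Quotient.mk ((X - Polynomial.C w) • y j) = _ at h
    rw [Submodule.Quotient.mk_eq_zero] at h
    exact h
  obtain ⟨p, hp, j0, hj0⟩ := exists_primitive m w (fun j => (y j : KM m))
  apply hj0
  refine Fintype.linearIndependent_iff.1 hf' (fun j => (p j).eval w) ?_ j0
  have h1 : ∀ j, (p j).eval w • (y j : KM m) - p j • (y j : KM m) ∈ A := by
    intro j
    obtain ⟨q, hq⟩ := Polynomial.X_sub_C_dvd_sub_C_eval (a := w) (p := p j)
    have h2 : (p j).eval w • (y j : KM m) - p j • (y j : KM m) =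
        - (q • ((X - Polynomial.C w) • (y j : KM m))) := by
      rw [smul_smul, mul_comm, ← hq, sub_smul, ← Polynomial.algebraMap_eq, algebraMap_smul]
      abel
    rw [h2]
    exact A.neg_mem (A.smul_mem q (hyA j))
  have h3 : ∑ j, (p j).eval w • (y j : KM m) ∈ A := by
    have := A.sum_mem (t := Finset.univ) fun j _ => h1 j
    rwa [Finset.sum_sub_distrib, hp, sub_zero] at this
  have h4 : (Submodule.Quotient.mk (∑ j, (p j).eval w • y j) : QuotMod m A C) = 0 := by
    rw [Submodule.Quotient.mk_eq_zero, Submodule.mem_comap]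
    simpa using h3
  rw [← h4, ← Submodule.mkQ_apply, map_sum]
  refine Finset.sum_congr rfl fun j _ => ?_
  simp only [Function.comp_apply, Submodule.subtype_apply, ← hy j]
  rfl

theorem range_inf (m : ℕ) (A B B' C : SubM m) (hAB' : A ≤ B') (hB : B ≤ C) (hB' : B' ≤ C) :
    LinearMap.range (quotIncl m A B C hB) ⊓ LinearMap.range (quotIncl m A B' C hB') ≤
      LinearMap.range (quotIncl m A (B ⊓ B') C (inf_le_left.trans hB)) := by
  rintro _ ⟨⟨u, rfl⟩, ⟨u', hu'⟩⟩
  obtain ⟨x, rfl⟩ := Submodule.Quotient.mk_surjective _ u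
  obtain ⟨x', rfl⟩ := Submodule.Quotient.mk_surjective _ u'
  rw [quotIncl_mk, quotIncl_mk, Submodule.Quotient.eq] at hu'
  have h1 : (x' : KM m) - x ∈ A := hu'
  have h2 := B'.sub_mem x'.2 (hAB' h1)
  rw [sub_sub_cancel] at h2
  exact ⟨Submodule.Quotient.mk ⟨x.1, x.2, h2⟩, rfl⟩

/-- when `w_i = w_{i+1} = w` and `k_i ≤ k_{i+1}`, for every point of
`Z(k)^i_w` one has `k_{i+1} ≤ dim ker((z-w)|_{L_{i+1}/L_{i-1}}) ≤ N` where
`N = min(k_i+k_{i+1}, m)`; consequently `Z(k)^i_w` is the union of the subsets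
`Z_s(k)^i_w`, `s = 0,…,N-k_{i+1}`. -/
theorem statement8 (m : ℕ) (hm : 2 ≤ m) (n : ℕ) (k : ℕ → ℕ) (w : ℕ → ℂ)
    (hk : ∀ j, 1 ≤ j → j ≤ n → 1 ≤ k j ∧ k j ≤ m - 1)
    (i : ℕ) (hi : 1 ≤ i) (hin : i + 1 ≤ n)
    (hww : w i = w (i + 1)) (hkk : k i ≤ k (i + 1))
    (N : ℕ) (hN : N = min (k i + k (i + 1)) m)
    (L L' : ℕ → SubM m) (hZ : IsZPair m n i k w L L')
    (d : ℕ)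
    (hd : d = Module.finrank ℂ
      ↥(LinearMap.ker
        (quotSmul m (Polynomial.X - Polynomial.C (w i)) (L (i - 1)) (L (i + 1))))) :
    (k (i + 1) ≤ d ∧ d ≤ N) ∧
    ∃ s ≤ N - k (i + 1),
      k (i + 1) + s ≤ d ∧ k i - s ≤ fdim m (L (i - 1)) (L i ⊓ L' i) := by
  obtain ⟨i, rfl⟩ : ∃ j, i = j + 1 := ⟨i - 1, by omega⟩
  obtain ⟨⟨-, hle, hfin, hdim, hz⟩, ⟨-, hle', -, hdim', hz'⟩, heq⟩ := hZ
  change d = Module.finrank ℂ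
      ↥(LinearMap.ker (quotSmul m (X - Polynomial.C (w (i + 1))) (L i) (L (i + 1 + 1)))) at hd
  rw [Nat.add_sub_cancel]
  have e0 := heq i (by omega)
  have e2 := heq (i + 1 + 1) (by omega)
  have hAB := hle i (by omega)
  have hBC := hle (i + 1) (by omega)
  have hAB' := hle' i (by omega)
  have hBC' := hle' (i + 1) (by omega)
  have hkB := hdim i (by omega)
  have hkC := hdim (i + 1) (by omega)
  have hkB' := hdim' i (by omega)
  have hzB := hz i (by omega)
  have hzB' := hz' i (by omega)
  simp only [swapAt, if_true] at hkB' hzB'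
  rw [← e0] at hAB' hkB' hzB'
  rw [← e2] at hBC'
  rw [← hww] at hzB'
  obtain ⟨hF, hdimC⟩ := quot_finite m _ _ _ hAB hBC (hfin i (by omega)) (hfin (i + 1) (by omega))
  have r1 := range_le_ker m _ _ _ _ hBC hzB
  have r2 := range_le_ker m _ _ _ _ hBC' hzB'
  have f1 := LinearMap.finrank_range_of_inj (quotIncl_injective m (L i) _ _ hBC)
  have f2 := LinearMap.finrank_range_of_inj (quotIncl_injective m (L i) _ _ hBC')
  have f3 := LinearMap.finrank_range_of_inj
    (quotIncl_injective m (L i) (L (i + 1) ⊓ L' (i + 1)) _ (inf_le_left.trans hBC))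
  have g1 := Submodule.finrank_mono r2
  have g2 := Submodule.finrank_mono (sup_le r1 r2)
  have g3 := Submodule.finrank_mono (range_inf m (L i) _ _ _ hAB' hBC hBC')
  have g4 := Submodule.finrank_sup_add_finrank_inf_eq
    (LinearMap.range (quotIncl m (L i) _ _ hBC)) (LinearMap.range (quotIncl m (L i) _ _ hBC'))
  have g5 := ker_le m (w (i + 1)) (L i) (L (i + 1 + 1))
  have g6 := Submodule.finrank_le
    (LinearMap.ker (quotSmul m (X - Polynomial.C (w (i + 1))) (L i) (L (i + 1 + 1))))
  unfold fdim at *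
  have hdN : d ≤ N := by
    rw [hN, le_min_iff]; omega
  refine ⟨⟨by omega, hdN⟩, d - k (i + 1 + 1), by omega, by omega, by omega⟩
end
end

section
/- Suppose 1 ≤ i ≤ n−2, w_i = w_{i+1} and w_i ≠ w_{i+2}. Let τ := s_i s_{i+1} s_i, which exchanges the i-th and (i+2)-nd entries of k̲ and of w̲, and let Z := {((L_•),(L'_•)) ∈ Y(k̲)_w̲ × Y(τ·k̲)_{τ·w̲} : L_j = L'_j for all j ∉ {i, i+1}}. Then the map sending ((L_•),(L'_•)) ∈ Z to ((L_•),(M_•)), where M_j = L_j for j ≠ i and M_i = {x ∈ L'_{i+1} : (z − w_i)·x ∈ L_{i−1}}, is a well-defined bijection from Z onto Z(k̲)^i_w̲. -/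
open Polynomial

set_option synthInstance.maxHeartbeats 1000000
set_option maxHeartbeats 1000000

noncomputable section

/-- `τ = s_i s_{i+1} s_i` : exchanging the `i`-th and `(i+2)`-nd entries of a sequence. -/
def swap2At {α : Type*} (i : ℕ) (f : ℕ → α) : ℕ → α :=
  fun j => if j = i then f (i + 2) else if j = i + 2 then f i else f j

/-- The correspondence `Z ⊆ Y(k)_w × Y(τ·k)_{τ·w}` consisting of pairs of chains that
agree except possibly in positions `i` and `i+1`. -/
def IsZBigPair (m n i : ℕ) (k : ℕ → ℕ) (w : ℕ → ℂ) (L L' : ℕ → SubM m) : Prop :=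
  IsYChain m n k w L ∧ IsYChain m n (swap2At i k) (swap2At i w) L' ∧
  ∀ j, j ≠ i → j ≠ i + 1 → L j = L' j

/-- The chain `M` with `M_j = L_j` for `j ≠ i` and
`M_i = {x ∈ L'_{i+1} : (z - w_i)·x ∈ L_{i-1}}`. -/
def tChain (m i : ℕ) (w : ℕ → ℂ) (L L' : ℕ → SubM m) : ℕ → SubM m :=
  fun j => if j = i then L' (i + 1) ⊓ (L (i - 1)).comap (zmul m (w i)) else L j

namespace Stmt10

def rk (m : ℕ) (A B : SubM m) : Cardinal := Module.rank ℂ (QuotMod m A B)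

theorem rk_add (m : ℕ) (A B C : SubM m) (hAB : A ≤ B) (hBC : B ≤ C) :
    rk m A C = rk m A B + rk m B C := by
  have h1 : A.comap B.subtype ≤ (A.comap C.subtype).comap (Submodule.inclusion hBC) :=
    fun x hx => hx
  have h2 : A.comap C.subtype ≤ (B.comap C.subtype).comap LinearMap.id :=
    fun x hx => hAB hx
  let f0 : QuotMod m A B →ₗ[Polynomial ℂ] QuotMod m A C := Submodule.mapQ _ _ _ h1
  let g0 : QuotMod m A C →ₗ[Polynomial ℂ] QuotMod m B C := Submodule.mapQ _ _ _ h2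
  let f : QuotMod m A B →ₗ[ℂ] QuotMod m A C := f0.restrictScalars ℂ
  let g : QuotMod m A C →ₗ[ℂ] QuotMod m B C := g0.restrictScalars ℂ
  have hf : Function.Injective f := by
    rw [← LinearMap.ker_eq_bot, LinearMap.ker_eq_bot']
    intro x hx
    induction x using Submodule.Quotient.induction_on with
    | _ x =>
      have : Submodule.Quotient.mk (p := A.comap C.subtype) (Submodule.inclusion hBC x) = 0 := hx
      rw [Submodule.Quotient.mk_eq_zero] at this ⊢
      exact this
  have hg : Function.Surjective g := by
    intro y
    induction y using Submodule.Quotient.induction_on with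
    | _ y => exact ⟨Submodule.Quotient.mk y, rfl⟩
  have hk : LinearMap.ker g = LinearMap.range f := by
    ext x
    induction x using Submodule.Quotient.induction_on with
    | _ x =>
      constructor
      · intro hx
        have : Submodule.Quotient.mk (p := B.comap C.subtype) x = 0 := hx
        rw [Submodule.Quotient.mk_eq_zero] at this
        exact ⟨Submodule.Quotient.mk ⟨x, this⟩, rfl⟩
      · rintro ⟨y, hy⟩
        rw [← hy]
        induction y using Submodule.Quotient.induction_on with
        | _ y =>
          have : Submodule.Quotient.mk (p := B.comap C.subtype) (Submodule.inclusion hBC y) = 0 := by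
            rw [Submodule.Quotient.mk_eq_zero]
            exact y.2
          exact this
  have h := LinearMap.rank_range_add_rank_ker g
  rw [hk, rank_range_of_injective f hf, rank_range_of_surjective g hg, add_comm] at h
  exact h.symm

theorem rk_inf (m : ℕ) (A B : SubM m) : rk m (A ⊓ B) A = rk m B (A ⊔ B) := by
  have e := (LinearMap.quotientInfEquivSupQuotient A B).restrictScalars ℂ
  have h := e.rank_eq
  unfold rk QuotMod
  rw [← h]
  rfl

theorem rk_iff (m : ℕ) (A B : SubM m) (d : ℕ) :
    (FiniteDimensional ℂ (QuotMod m A B) ∧ fdim m A B = d) ↔ rk m A B = d := by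
  constructor
  · rintro ⟨h, rfl⟩
    exact (Module.finrank_eq_rank ℂ (QuotMod m A B)).symm
  · intro h
    refine ⟨?_, Module.finrank_eq_of_rank_eq h⟩
    refine Module.rank_lt_aleph0_iff.mp ?_
    change rk m A B < _
    rw [h]
    exact Cardinal.natCast_lt_aleph0

theorem rk_cancel (m : ℕ) (A B C : SubM m) (hAB : A ≤ B) (hBC : B ≤ C) (a c : ℕ)
    (h1 : rk m A B = a) (h2 : rk m A C = (a + c : ℕ)) : rk m B C = c := by
  rw [rk_add m A B C hAB hBC, h1, Nat.cast_add] at h2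
  rw [add_comm, add_comm (a : Cardinal)] at h2
  exact (Cardinal.add_right_inj_of_lt_aleph0 Cardinal.natCast_lt_aleph0).mp h2

def St (m : ℕ) (A B : SubM m) (a : ℂ) (d : ℕ) : Prop :=
  A ≤ B ∧ rk m A B = d ∧ ∀ x ∈ B, (X - C a : ℂ[X]) • x ∈ A

theorem chain_iff (m n : ℕ) (k : ℕ → ℕ) (w : ℕ → ℂ) (L : ℕ → SubM m) :
    IsYChain m n k w L ↔
      L 0 = polyL0 m ∧ ∀ i < n, St m (L i) (L (i + 1)) (w (i + 1)) (k (i + 1)) := by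
  constructor
  · rintro ⟨h0, h1, h2, h3, h4⟩
    exact ⟨h0, fun i hi => ⟨h1 i hi, (rk_iff ..).1 ⟨h2 i hi, h3 i hi⟩, fun x hx => h4 i hi x hx⟩⟩
  · rintro ⟨h0, h⟩
    exact ⟨h0, fun i hi => (h i hi).1, fun i hi => ((rk_iff ..).2 (h i hi).2.1).1,
      fun i hi => ((rk_iff ..).2 (h i hi).2.1).2, fun i hi x hx => (h i hi).2.2 x hx⟩

/-- coprimality -/
theorem cop (m : ℕ) (a b : ℂ) (hab : a ≠ b) (x : KM m) :
    x = (C (a - b)⁻¹ : ℂ[X]) • ((X - C b : ℂ[X]) • x) -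
      (C (a - b)⁻¹ : ℂ[X]) • ((X - C a : ℂ[X]) • x) := by
  rw [← smul_sub, ← sub_smul, smul_smul]
  have : (C (a - b)⁻¹ : ℂ[X]) * ((X - C b) - (X - C a)) = 1 := by
    rw [show (X - C b : ℂ[X]) - (X - C a) = C (a - b) by rw [C_sub]; ring, ← C_mul,
      inv_mul_cancel₀ (sub_ne_zero.2 hab), C_1]
  rw [this, one_smul]

theorem cop_mem (m : ℕ) (a b : ℂ) (hab : a ≠ b) (N : SubM m) (x : KM m)
    (ha : (X - C a : ℂ[X]) • x ∈ N) (hb : (X - C b : ℂ[X]) • x ∈ N) : x ∈ N := by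
  rw [cop m a b hab x]
  exact N.sub_mem (N.smul_mem _ hb) (N.smul_mem _ ha)

theorem cop_mem2 (m : ℕ) (a b : ℂ) (hab : a ≠ b) (N : SubM m) (x : KM m)
    (ha : (X - C a : ℂ[X]) • ((X - C a : ℂ[X]) • x) ∈ N)
    (hb : (X - C b : ℂ[X]) • x ∈ N) : x ∈ N := by
  refine cop_mem m a b hab N x (cop_mem m a b hab N _ ha ?_) hb
  rw [smul_comm]
  exact N.smul_mem _ hb

/-- the `a`-torsion of `B` relative to `N` -/
def tor (m : ℕ) (a : ℂ) (N B : SubM m) : SubM m := B ⊓ N.comap (zmul m a)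

theorem mem_tor (m : ℕ) (a : ℂ) (N B : SubM m) (x : KM m) :
    x ∈ tor m a N B ↔ x ∈ B ∧ (X - C a : ℂ[X]) • x ∈ N := Iff.rfl

variable {m : ℕ} {a b : ℂ} {N L1 L2 L3 P1 P2 M : SubM m} {d1 d2 d3 : ℕ}

theorem P1_eq (hab : a ≠ b) (g1 : St m N P1 b d3) (g2 : St m P1 P2 a d2)
    (g3 : St m P2 L3 a d1) : P1 = tor m b N L3 := by
  apply le_antisymm
  · intro x hx
    exact ⟨g3.1 (g2.1 hx), g1.2.2 x hx⟩
  · intro x hx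
    rw [mem_tor] at hx
    exact cop_mem2 m a b hab _ _ (g2.2.2 _ (g3.2.2 _ hx.1)) (g1.1 hx.2)

theorem P2_eq (hab : a ≠ b) (g1 : St m N P1 b d3) (g2 : St m P1 P2 a d2) :
    P2 = tor m a N P2 ⊔ P1 := by
  apply le_antisymm
  · intro x hx
    rw [cop m a b hab x]
    refine Submodule.sub_mem _ (Submodule.smul_mem _ _ (Submodule.mem_sup_left ?_))
      (Submodule.smul_mem _ _ (Submodule.mem_sup_right (g2.2.2 x hx)))
    refine (mem_tor ..).2 ⟨P2.smul_mem _ hx, ?_⟩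
    rw [smul_comm]
    exact g1.2.2 _ (g2.2.2 x hx)
  · exact sup_le inf_le_left g2.1

theorem inf_eq (hab : a ≠ b) {U V : SubM m} (hU : ∀ x ∈ U, (X - C a : ℂ[X]) • ((X - C a : ℂ[X]) • x) ∈ N)
    (hV : ∀ x ∈ V, (X - C b : ℂ[X]) • x ∈ N) (h1 : N ≤ U) (h2 : N ≤ V) : U ⊓ V = N :=
  le_antisymm (fun x hx => cop_mem2 m a b hab _ _ (hU x hx.1) (hV x hx.2)) (le_inf h1 h2)

theorem fwd (hab : a ≠ b) (f1 : St m N L1 a d1) (f2 : St m L1 L2 a d2) (f3 : St m L2 L3 b d3)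
    (g1 : St m N P1 b d3) (g2 : St m P1 P2 a d2) (g3 : St m P2 L3 a d1) :
    St m N (tor m a N P2) a d2 ∧ St m (tor m a N P2) L2 a d1 := by
  have hN : N ≤ tor m a N P2 := fun x hx =>
    (mem_tor ..).2 ⟨g2.1 (g1.1 hx), N.smul_mem _ hx⟩
  have hr : rk m N (tor m a N P2) = d2 := by
    have h := rk_inf m (tor m a N P2) P1
    rw [← P2_eq hab g1 g2, g2.2.1, inf_eq (N := N) hab
      (fun x hx => N.smul_mem _ ((mem_tor m a N P2 x).1 hx).2) g1.2.2
      hN g1.1] at h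
    exact h
  have hle : tor m a N P2 ≤ L2 := by
    intro x hx
    rw [mem_tor] at hx
    exact cop_mem m a b hab _ _ (f2.1 (f1.1 hx.2)) (f3.2.2 _ (g3.1 hx.1))
  refine ⟨⟨hN, hr, fun x hx => hx.2⟩, hle, ?_, ?_⟩
  · refine rk_cancel m N _ L2 hN hle d2 d1 hr ?_
    rw [rk_add m N L1 L2 f1.1 f2.1, f1.2.1, f2.2.1, Nat.cast_add, add_comm]
  · intro x hx
    exact (mem_tor ..).2 ⟨g3.2.2 _ (f3.1 hx), f1.2.2 _ (f2.2.2 _ hx)⟩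

theorem bwd (hab : a ≠ b) (f1 : St m N L1 a d1) (f2 : St m L1 L2 a d2) (f3 : St m L2 L3 b d3)
    (g1 : St m N M a d2) (g2 : St m M L2 a d1) :
    St m N (tor m b N L3) b d3 ∧ St m (tor m b N L3) (M ⊔ tor m b N L3) a d2 ∧
      St m (M ⊔ tor m b N L3) L3 a d1 ∧ tor m a N (M ⊔ tor m b N L3) = M := by
  set B := tor m b N L3 with hB
  have hNL2 : N ≤ L2 := f1.1.trans f2.1
  have hNL3 : N ≤ L3 := hNL2.trans f3.1
  have hN : N ≤ B := fun x hx => (mem_tor ..).2 ⟨hNL3 hx, N.smul_mem _ hx⟩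
  have hBL : B ≤ L3 := inf_le_left
  have hBb : ∀ x ∈ B, (X - C b : ℂ[X]) • x ∈ N := fun x hx => hx.2
  have h2a : ∀ x ∈ L2, (X - C a : ℂ[X]) • ((X - C a : ℂ[X]) • x) ∈ N :=
    fun x hx => f1.2.2 _ (f2.2.2 _ hx)
  have hsup : L2 ⊔ B = L3 := by
    apply le_antisymm (sup_le f3.1 hBL)
    intro x hx
    have key : ∀ y ∈ L3, (X - C a : ℂ[X]) • ((X - C a : ℂ[X]) • y) ∈ B := fun y hy => by
      refine (mem_tor ..).2 ⟨L3.smul_mem _ (L3.smul_mem _ hy), ?_⟩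
      rw [smul_comm, smul_comm (X - C b : ℂ[X])]
      exact h2a _ (f3.2.2 _ hy)
    exact cop_mem2 m a b hab _ _ (Submodule.mem_sup_right (key x hx))
      (Submodule.mem_sup_left (f3.2.2 _ hx))
  have hrB : rk m N B = d3 := by
    have h := rk_inf m B L2
    rw [inf_comm, inf_eq (N := N) hab h2a hBb hNL2 hN, sup_comm, hsup, f3.2.1] at h
    exact h
  have hrM : rk m B (M ⊔ B) = d2 := by
    rw [← rk_inf, inf_eq (N := N) hab (fun x hx => N.smul_mem _ (g1.2.2 x hx)) hBb g1.1 hN, g1.2.1]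
  have hML : M ⊔ B ≤ L3 := sup_le (g2.1.trans f3.1) hBL
  refine ⟨⟨hN, hrB, hBb⟩, ⟨le_sup_right, hrM, ?_⟩, ⟨hML, ?_, ?_⟩, ?_⟩
  · intro x hx
    obtain ⟨y, hy, z, hz, rfl⟩ := Submodule.mem_sup.1 hx
    rw [smul_add]
    exact B.add_mem (hN (g1.2.2 y hy)) (B.smul_mem _ hz)
  · refine rk_cancel m N _ L3 (hN.trans le_sup_right) hML (d3 + d2) d1 ?_ ?_
    · rw [rk_add m N B _ hN le_sup_right, hrB, hrM, Nat.cast_add]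
    · rw [rk_add m N L2 L3 hNL2 f3.1, rk_add m N L1 L2 f1.1 f2.1, f1.2.1, f2.2.1, f3.2.1]
      push_cast
      ring
  · intro x hx
    rw [← hsup] at hx
    obtain ⟨y, hy, z, hz, rfl⟩ := Submodule.mem_sup.1 hx
    rw [smul_add]
    exact Submodule.add_mem _ (Submodule.mem_sup_left (g2.2.2 y hy))
      (Submodule.mem_sup_right (B.smul_mem _ hz))
  · apply le_antisymm
    · intro x hx
      rw [mem_tor] at hx
      obtain ⟨hx, hxa⟩ := hx
      obtain ⟨y, hy, z, hz, rfl⟩ := Submodule.mem_sup.1 hx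
      refine M.add_mem hy (g1.1 (cop_mem m a b hab N z ?_ (hBb z hz)))
      rw [smul_add] at hxa
      exact (N.add_mem_iff_right (g1.2.2 y hy)).1 hxa
    · intro x hx
      exact (mem_tor ..).2 ⟨Submodule.mem_sup_left hx, g1.2.2 x hx⟩

/-- the three steps of a chain in `Y(k)` -/
theorem steps {n j : ℕ} {k : ℕ → ℕ} {w : ℕ → ℂ} {L : ℕ → SubM m} (hin : j + 1 + 2 ≤ n)
    (h : IsYChain m n k w L) :
    St m (L j) (L (j+1)) (w (j+1)) (k (j+1)) ∧ St m (L (j+1)) (L (j+2)) (w (j+2)) (k (j+2)) ∧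
    St m (L (j+2)) (L (j+3)) (w (j+3)) (k (j+3)) := by
  rw [chain_iff] at h
  exact ⟨h.2 j (by omega), h.2 (j+1) (by omega), h.2 (j+2) (by omega)⟩

theorem steps_big {n j : ℕ} {k : ℕ → ℕ} {w : ℕ → ℂ} {L L' : ℕ → SubM m} (hin : j + 1 + 2 ≤ n)
    (hww : w (j + 1) = w (j + 2)) (h : IsZBigPair m n (j+1) k w L L') :
    St m (L j) (L' (j+1)) (w (j+3)) (k (j+3)) ∧ St m (L' (j+1)) (L' (j+2)) (w (j+1)) (k (j+2)) ∧
    St m (L' (j+2)) (L (j+3)) (w (j+1)) (k (j+1)) := by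
  obtain ⟨_, h2, h3⟩ := h
  have := steps hin h2
  rw [h3 j (by omega) (by omega), h3 (j+3) (by omega) (by omega)]
  simpa [swap2At, ← hww] using this

end Stmt10

/-- when `w_i = w_{i+1}` and `w_i ≠ w_{i+2}`, the map
`((L),(L')) ↦ ((L),(M))` with `M_j = L_j` for `j ≠ i` and
`M_i = {x ∈ L'_{i+1} : (z-w_i)·x ∈ L_{i-1}}` is a well-defined bijection from `Z`
onto `Z(k)^i_w`. -/
theorem statement10 (m : ℕ) (hm : 2 ≤ m) (n : ℕ) (k : ℕ → ℕ) (w : ℕ → ℂ)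
    (hk : ∀ j, 1 ≤ j → j ≤ n → 1 ≤ k j ∧ k j ≤ m - 1)
    (i : ℕ) (hi : 1 ≤ i) (hin : i + 2 ≤ n)
    (hww : w i = w (i + 1)) (hw2 : w i ≠ w (i + 2)) :
    -- the map is well defined
    (∀ L L' : ℕ → SubM m, IsZBigPair m n i k w L L' →
        IsZPair m n i k w L (tChain m i w L L')) ∧
    -- the map is injective
    (∀ L L' Lc L'c : ℕ → SubM m, IsZBigPair m n i k w L L' →
        IsZBigPair m n i k w Lc L'c → L = Lc →
        tChain m i w L L' = tChain m i w Lc L'c → L' = L'c) ∧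
    -- the map is onto Z(k)^i_w
    (∀ L M : ℕ → SubM m, IsZPair m n i k w L M →
        ∃ L' : ℕ → SubM m, IsZBigPair m n i k w L L' ∧ tChain m i w L L' = M) := by
  obtain ⟨j, rfl⟩ : ∃ j, i = j + 1 := ⟨i - 1, by omega⟩
  have ht : ∀ L L' : ℕ → SubM m, tChain m (j+1) w L L' (j+1) =
      Stmt10.tor m (w (j+1)) (L j) (L' (j+2)) := fun L L' => by
    simp [tChain, Stmt10.tor]
  have ht' : ∀ L L' : ℕ → SubM m, ∀ l, l ≠ j + 1 → tChain m (j+1) w L L' l = L l :=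
    fun L L' l hl => by simp [tChain, hl]
  have hww' : w (j+1) = w (j+2) := hww
  have hw2' : w (j+1) ≠ w (j+3) := hw2
  refine ⟨?_, ?_, ?_⟩
  · intro L L' h
    refine ⟨h.1, ?_, fun l hl => (ht' L L' l hl).symm⟩
    obtain ⟨f1, f2, f3⟩ := Stmt10.steps hin h.1
    obtain ⟨g1, g2, g3⟩ := Stmt10.steps_big hin hww' h
    rw [← hww'] at f2
    obtain ⟨r1, r2⟩ := Stmt10.fwd hw2' f1 f2 f3 g1 g2 g3
    have hc := (Stmt10.chain_iff ..).1 h.1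
    rw [Stmt10.chain_iff]
    refine ⟨by rw [ht' _ _ _ (by omega)]; exact hc.1, ?_⟩
    intro l hl
    rcases eq_or_ne l j with rfl | h1
    · rw [ht, ht' _ _ _ (by omega)]
      simpa [swapAt, ← hww'] using r1
    rcases eq_or_ne l (j+1) with rfl | h2
    · rw [ht, ht' _ _ _ (by omega)]
      simpa [swapAt] using r2
    rw [ht' _ _ _ (by omega), ht' _ _ _ (by omega)]
    have := hc.2 l hl
    simpa [swapAt, h1, h2] using this
  · intro L L' Lc L'c h hc hL hE
    subst hL
    obtain ⟨g1, g2, g3⟩ := Stmt10.steps_big hin hww' h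
    obtain ⟨c1, c2, c3⟩ := Stmt10.steps_big hin hww' hc
    have e1 : L' (j+1) = L'c (j+1) :=
      (Stmt10.P1_eq hw2' g1 g2 g3).trans (Stmt10.P1_eq hw2' c1 c2 c3).symm
    have e := congrFun hE (j+1)
    rw [ht, ht] at e
    have e2 : L' (j+2) = L'c (j+2) := by
      rw [Stmt10.P2_eq hw2' g1 g2, Stmt10.P2_eq hw2' c1 c2, e, e1]
    funext l
    rcases eq_or_ne l (j+1) with rfl | h1
    · exact e1
    rcases eq_or_ne l (j+2) with rfl | h2
    · exact e2
    rw [← h.2.2 l h1 h2, ← hc.2.2 l h1 h2]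
  · intro L M h
    obtain ⟨f1, f2, f3⟩ := Stmt10.steps hin h.1
    obtain ⟨g1, g2, -⟩ := Stmt10.steps hin h.2.1
    rw [← h.2.2 j (by omega)] at g1
    rw [← h.2.2 (j+2) (by omega)] at g2
    simp only [swapAt, if_true, Nat.add_left_cancel_iff, OfNat.ofNat_ne_one, if_false] at g1 g2
    simp only [show j + 1 + 1 = j + 2 from rfl, if_true, ← hww'] at g1 g2 f2
    obtain ⟨r1, r2, r3, r4⟩ := Stmt10.bwd hw2' f1 f2 f3 g1 g2
    set B := Stmt10.tor m (w (j+3)) (L j) (L (j+3)) with hB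
    let L' : ℕ → SubM m := fun l => if l = j + 1 then B else if l = j + 2 then M (j+1) ⊔ B else L l
    have l1 : L' (j+1) = B := by simp [L']
    have l2 : L' (j+2) = M (j+1) ⊔ B := by simp [L']
    have l3 : ∀ l, l ≠ j + 1 → l ≠ j + 2 → L' l = L l := fun l h1 h2 => by simp [L', h1, h2]
    have hc := (Stmt10.chain_iff ..).1 h.1
    refine ⟨L', ⟨h.1, ?_, fun l h1 h2 => (l3 l h1 h2).symm⟩, ?_⟩
    · rw [Stmt10.chain_iff]
      refine ⟨by rw [l3 _ (by omega) (by omega)]; exact hc.1, ?_⟩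
      intro l hl
      rcases eq_or_ne l j with rfl | h1
      · rw [l1, l3 _ (by omega) (by omega)]
        simpa [swap2At] using r1
      rcases eq_or_ne l (j+1) with rfl | h2
      · rw [l1, show j + 1 + 1 = j + 2 from rfl, l2]
        simpa [swap2At, ← hww'] using r2
      rcases eq_or_ne l (j+2) with rfl | h3
      · rw [l2, l3 _ (by omega) (by omega)]
        simpa [swap2At] using r3
      rw [l3 _ (by omega) (by omega), l3 _ (by omega) (by omega)]
      have := hc.2 l hl
      simpa [swap2At, h1, h2, h3] using this
    · funext l
      rcases eq_or_ne l (j+1) with rfl | h1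
      · rw [ht, l2, r4]
      · rw [ht' _ _ _ h1, h.2.2 l h1]
end
end

section
/- Let (L₁, L'₁, L₂) ∈ Z(k,l) and let 0 ≤ s ≤ N−l. Suppose dim_ℂ ker(z|_{L₂/L₀}) ≥ l+s, dim_ℂ((L₁ ∩ L'₁)/L₀) ≥ k−s, and dim_ℂ ker(z|_{L₂/L₀}) + dim_ℂ((L₁ ∩ L'₁)/L₀) ≤ k+l+1. Then there exists a unique pair (W₁, W₂) of R-submodules of K^m satisfying: L₀ ⊆ W₁ ⊆ L₁ ∩ L'₁, L₁ + L'₁ ⊆ W₂ ⊆ L₂, dim_ℂ(W₁/L₀) = k−s, dim_ℂ(W₂/L₀) = l+s, z·L₂ ⊆ W₁, and z·W₂ ⊆ L₀. -/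
open Polynomial

set_option synthInstance.maxHeartbeats 1000000
set_option maxHeartbeats 1000000

noncomputable section

/-- Multiplication by `z` as an `R`-linear endomorphism of `K^m`. -/
def zmul0 (m : ℕ) : KM m →ₗ[Polynomial ℂ] KM m :=
  (Polynomial.X : Polynomial ℂ) • LinearMap.id

/-- Membership in the two-strand correspondence `Z(k,l)`. -/
def InZkl (m k l : ℕ) (L₁ L₁' L₂ : SubM m) : Prop :=
  polyL0 m ≤ L₁ ∧ L₁ ≤ L₂ ∧ polyL0 m ≤ L₁' ∧ L₁' ≤ L₂ ∧
  fdim m (polyL0 m) L₁ = k ∧ fdim m (polyL0 m) L₁' = l ∧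
  fdim m (polyL0 m) L₂ = k + l ∧
  (∀ x ∈ L₁, zmul0 m x ∈ polyL0 m) ∧ (∀ x ∈ L₁', zmul0 m x ∈ polyL0 m) ∧
  (∀ x ∈ L₂, zmul0 m x ∈ L₁) ∧ (∀ x ∈ L₂, zmul0 m x ∈ L₁')

/-- The image of `B` in `K^m / L₀`, as a complex vector space. -/
def FF (m : ℕ) (B : SubM m) : Submodule ℂ (KM m ⧸ polyL0 m) :=
  (B.map (polyL0 m).mkQ).restrictScalars ℂ

/-- The inclusion of `B / L₀` in `K^m / L₀`. -/
def jj (m : ℕ) (B : SubM m) : QuotMod m (polyL0 m) B →ₗ[ℂ] (KM m ⧸ polyL0 m) :=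
  (Submodule.mapQ ((polyL0 m).comap B.subtype) (polyL0 m) B.subtype le_rfl).restrictScalars ℂ

lemma jj_mk (m : ℕ) (B : SubM m) (x : B) :
    jj m B (Submodule.Quotient.mk x) = Submodule.Quotient.mk (x : KM m) := rfl

lemma jj_inj (m : ℕ) (B : SubM m) : Function.Injective (jj m B) := by
  rw [injective_iff_map_eq_zero]
  intro a
  obtain ⟨x, rfl⟩ := Submodule.Quotient.mk_surjective _ a
  rw [jj_mk, Submodule.Quotient.mk_eq_zero, Submodule.Quotient.mk_eq_zero]
  exact fun h => h

lemma mem_FF (m : ℕ) (B : SubM m) (v) :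
    v ∈ FF m B ↔ ∃ x ∈ B, (Submodule.Quotient.mk x : KM m ⧸ polyL0 m) = v := Iff.rfl

lemma mk_mem_FF (m : ℕ) (B : SubM m) (hB : polyL0 m ≤ B) (x : KM m) :
    (Submodule.Quotient.mk x : KM m ⧸ polyL0 m) ∈ FF m B ↔ x ∈ B := by
  rw [mem_FF]
  constructor
  · rintro ⟨y, hy, h⟩
    rw [Submodule.Quotient.eq] at h
    have := B.sub_mem hy (hB h)
    simpa using this
  · exact fun h => ⟨x, h, rfl⟩

lemma range_jj (m : ℕ) (B : SubM m) : LinearMap.range (jj m B) = FF m B := by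
  ext v
  rw [mem_FF, LinearMap.mem_range]
  constructor
  · rintro ⟨a, rfl⟩
    obtain ⟨x, rfl⟩ := Submodule.Quotient.mk_surjective _ a
    exact ⟨x, x.2, rfl⟩
  · rintro ⟨x, hx, rfl⟩
    exact ⟨Submodule.Quotient.mk ⟨x, hx⟩, rfl⟩

lemma fdim_eq (m : ℕ) (B : SubM m) :
    fdim m (polyL0 m) B = Module.finrank ℂ (FF m B) := by
  rw [← range_jj, LinearMap.finrank_range_of_inj (jj_inj m B)]
  rfl

lemma FF_le (m : ℕ) {A B : SubM m} (h : A ≤ B) : FF m A ≤ FF m B := by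
  intro v hv
  obtain ⟨x, hx, rfl⟩ := hv
  exact ⟨x, h hx, rfl⟩

lemma FF_sup (m : ℕ) (A B : SubM m) : FF m (A ⊔ B) = FF m A ⊔ FF m B := by
  unfold FF
  rw [Submodule.map_sup, Submodule.restrictScalars_sup]

lemma FF_inf (m : ℕ) (A B : SubM m) (hA : polyL0 m ≤ A) (hB : polyL0 m ≤ B) :
    FF m (A ⊓ B) = FF m A ⊓ FF m B := by
  ext v
  obtain ⟨x, rfl⟩ := Submodule.Quotient.mk_surjective _ v
  rw [mk_mem_FF m _ (le_inf hA hB), Submodule.mem_inf, Submodule.mem_inf,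
    mk_mem_FF m _ hA, mk_mem_FF m _ hB]

lemma eq_of_fdim (m : ℕ) {A B : SubM m} (hA : polyL0 m ≤ A) (hAB : A ≤ B)
    [FiniteDimensional ℂ (FF m B)]
    (h : fdim m (polyL0 m) A = fdim m (polyL0 m) B) : A = B := by
  rw [fdim_eq, fdim_eq] at h
  have h2 := Submodule.eq_of_le_of_finrank_eq (FF_le m hAB) h
  ext x
  rw [← mk_mem_FF m A hA, ← mk_mem_FF m B (hA.trans hAB), h2]

/-- `z L₂ + L₀`. -/
def II (m : ℕ) (B : SubM m) : SubM m := polyL0 m ⊔ B.map (zmul0 m)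

/-- the kernel of `z` on `L₂`, modulo `L₀`. -/
def KK (m : ℕ) (B : SubM m) : SubM m := B ⊓ (polyL0 m).comap (zmul0 m)

lemma FF_ker (m : ℕ) (B : SubM m) :
    Module.finrank ℂ (LinearMap.ker (quotSmul m Polynomial.X (polyL0 m) B))
      = fdim m (polyL0 m) (KK m B) := by
  rw [fdim_eq]
  have : (LinearMap.ker (quotSmul m Polynomial.X (polyL0 m) B)).map (jj m B)
      = FF m (KK m B) := by
    ext v
    rw [mem_FF, Submodule.mem_map]
    constructor
    · rintro ⟨a, ha, rfl⟩
      obtain ⟨x, rfl⟩ := Submodule.Quotient.mk_surjective _ a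
      refine ⟨x, ⟨x.2, ?_⟩, rfl⟩
      have h2 : (Submodule.Quotient.mk ((Polynomial.X : Polynomial ℂ) • x) :
          QuotMod m (polyL0 m) B) = 0 := LinearMap.mem_ker.1 ha
      rw [Submodule.Quotient.mk_eq_zero] at h2
      exact h2
    · rintro ⟨x, hx, rfl⟩
      refine ⟨Submodule.Quotient.mk ⟨x, hx.1⟩, ?_, rfl⟩
      exact (Submodule.Quotient.mk_eq_zero _).2 hx.2
  rw [← this]
  exact (Submodule.equivMapOfInjective (jj m B) (jj_inj m B) _).finrank_eq

lemma FF_range (m : ℕ) (B : SubM m) :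
    Module.finrank ℂ (LinearMap.range (quotSmul m Polynomial.X (polyL0 m) B))
      = fdim m (polyL0 m) (II m B) := by
  rw [fdim_eq]
  have : (LinearMap.range (quotSmul m Polynomial.X (polyL0 m) B)).map (jj m B)
      = FF m (II m B) := by
    ext v
    rw [mem_FF, Submodule.mem_map]
    constructor
    · rintro ⟨_, ⟨a, rfl⟩, rfl⟩
      obtain ⟨x, rfl⟩ := Submodule.Quotient.mk_surjective _ a
      exact ⟨zmul0 m x, (le_sup_right : _ ≤ II m B) ⟨x, x.2, rfl⟩, rfl⟩
    · rintro ⟨x, hx, rfl⟩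
      obtain ⟨y, hy, _, ⟨w, hw, rfl⟩, rfl⟩ := Submodule.mem_sup.1 hx
      refine ⟨_, ⟨Submodule.Quotient.mk ⟨w, hw⟩, rfl⟩, ?_⟩
      change Submodule.Quotient.mk (zmul0 m w) = _
      rw [Submodule.Quotient.mk_add, (Submodule.Quotient.mk_eq_zero _).2 hy, zero_add]
  rw [← this]
  exact (Submodule.equivMapOfInjective (jj m B) (jj_inj m B) _).finrank_eq

/-- on `Z^o_s(k,l)` there is a unique pair `(W₁, W₂)` with
`L₀ ⊆ W₁ ⊆ L₁ ∩ L'₁`, `L₁ + L'₁ ⊆ W₂ ⊆ L₂`, `dim(W₁/L₀) = k-s`, `dim(W₂/L₀) = l+s`,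
`z·L₂ ⊆ W₁` and `z·W₂ ⊆ L₀`. -/
theorem statement11 (m : ℕ) (hm : 2 ≤ m) (k l : ℕ)
    (hk1 : 1 ≤ k) (hkl : k ≤ l) (hl : l ≤ m - 1) (hsum : k + l ≤ 2 * m - 2)
    (N : ℕ) (hN : N = min (k + l) m)
    (L₁ L₁' L₂ : SubM m) (hZ : InZkl m k l L₁ L₁' L₂)
    (s : ℕ) (hs : s ≤ N - l)
    (d : ℕ)
    (hd : d = Module.finrank ℂ
      ↥(LinearMap.ker (quotSmul m Polynomial.X (polyL0 m) L₂)))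
    (hds : l + s ≤ d)
    (hint : k - s ≤ fdim m (polyL0 m) (L₁ ⊓ L₁'))
    (ho : d + fdim m (polyL0 m) (L₁ ⊓ L₁') ≤ k + l + 1) :
    ∃! W : SubM m × SubM m,
      polyL0 m ≤ W.1 ∧ W.1 ≤ L₁ ⊓ L₁' ∧ L₁ ⊔ L₁' ≤ W.2 ∧ W.2 ≤ L₂ ∧
      fdim m (polyL0 m) W.1 = k - s ∧ fdim m (polyL0 m) W.2 = l + s ∧
      (∀ x ∈ L₂, zmul0 m x ∈ W.1) ∧ (∀ x ∈ W.2, zmul0 m x ∈ polyL0 m) := by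
  obtain ⟨h01, h12, h01', h12', f1, f1', f2, z1, z1', z2, z2'⟩ := hZ
  have hsk : s ≤ k := by omega
  have h02 : polyL0 m ≤ L₂ := h01.trans h12
  have fin2 : FiniteDimensional ℂ (FF m L₂) := by
    apply Module.finite_of_finrank_pos
    rw [← fdim_eq, f2]; omega
  have finq : FiniteDimensional ℂ (QuotMod m (polyL0 m) L₂) := by
    apply Module.finite_of_finrank_pos
    change 0 < fdim m (polyL0 m) L₂
    rw [f2]; omega
  have fin : ∀ {B : SubM m}, B ≤ L₂ → FiniteDimensional ℂ (FF m B) := fun h =>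
    Submodule.finiteDimensional_of_le (FF_le m h)
  have mono : ∀ {A B : SubM m}, A ≤ B → B ≤ L₂ →
      fdim m (polyL0 m) A ≤ fdim m (polyL0 m) B := by
    intro A B h hB
    have := fin hB
    rw [fdim_eq, fdim_eq]
    exact Submodule.finrank_mono (FF_le m h)
  have e1 := LinearMap.finrank_range_add_finrank_ker (quotSmul m Polynomial.X (polyL0 m) L₂)
  rw [← hd, FF_range] at e1
  change _ = fdim m (polyL0 m) L₂ at e1
  rw [f2] at e1
  rw [FF_ker] at hd
  have := fin h12
  have := fin h12'
  have e2 := Submodule.finrank_sup_add_finrank_inf_eq (FF m L₁) (FF m L₁')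
  rw [← FF_sup, ← FF_inf m _ _ h01 h01', ← fdim_eq, ← fdim_eq, ← fdim_eq, ← fdim_eq,
    f1, f1'] at e2
  have hJ2 : L₁ ⊓ L₁' ≤ L₂ := inf_le_left.trans h12
  have hS2 : L₁ ⊔ L₁' ≤ L₂ := sup_le h12 h12'
  have hK2 : KK m L₂ ≤ L₂ := inf_le_left
  have hIJ : II m L₂ ≤ L₁ ⊓ L₁' := by
    refine sup_le (le_inf h01 h01') ?_
    rintro _ ⟨x, hx, rfl⟩
    exact ⟨z2 x hx, z2' x hx⟩
  have hSK : L₁ ⊔ L₁' ≤ KK m L₂ := le_inf hS2 (sup_le z1 z1')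
  have h0I : polyL0 m ≤ II m L₂ := le_sup_left
  have h0S : polyL0 m ≤ L₁ ⊔ L₁' := h01.trans le_sup_left
  have zI : ∀ {W : SubM m}, II m L₂ ≤ W → ∀ x ∈ L₂, zmul0 m x ∈ W := fun h x hx =>
    h ((le_sup_right : _ ≤ II m L₂) ⟨x, hx, rfl⟩)
  have zK : ∀ {W : SubM m}, W ≤ KK m L₂ → ∀ x ∈ W, zmul0 m x ∈ polyL0 m := fun h x hx =>
    (h hx).2
  have m1 := mono hIJ hJ2
  have ex1 : ∃ W, II m L₂ ≤ W ∧ W ≤ L₁ ⊓ L₁' ∧ fdim m (polyL0 m) W = k - s ∧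
      ∀ W', II m L₂ ≤ W' → W' ≤ L₁ ⊓ L₁' → fdim m (polyL0 m) W' = k - s → W' = W := by
    by_cases h : fdim m (polyL0 m) (II m L₂) = k - s
    · refine ⟨_, le_rfl, hIJ, h, fun W' a b c => ?_⟩
      have := fin (b.trans hJ2)
      exact (eq_of_fdim m h0I a (h.trans c.symm)).symm
    · have h : fdim m (polyL0 m) (L₁ ⊓ L₁') = k - s := by omega
      refine ⟨_, hIJ, le_rfl, h, fun W' a b c => ?_⟩
      have := fin hJ2
      exact eq_of_fdim m (h0I.trans a) b (c.trans h.symm)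
  have ex2 : ∃ W, L₁ ⊔ L₁' ≤ W ∧ W ≤ KK m L₂ ∧ fdim m (polyL0 m) W = l + s ∧
      ∀ W', L₁ ⊔ L₁' ≤ W' → W' ≤ KK m L₂ → fdim m (polyL0 m) W' = l + s → W' = W := by
    by_cases h : fdim m (polyL0 m) (L₁ ⊔ L₁') = l + s
    · refine ⟨_, le_rfl, hSK, h, fun W' a b c => ?_⟩
      have := fin (b.trans hK2)
      exact (eq_of_fdim m h0S a (h.trans c.symm)).symm
    · have h : fdim m (polyL0 m) (KK m L₂) = l + s := by omega
      refine ⟨_, hSK, le_rfl, h, fun W' a b c => ?_⟩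
      have := fin hK2
      exact eq_of_fdim m (h0S.trans a) b (c.trans h.symm)
  obtain ⟨W₁, a1, a2, a3, a4⟩ := ex1
  obtain ⟨W₂, b1, b2, b3, b4⟩ := ex2
  refine ⟨(W₁, W₂), ⟨h0I.trans a1, a2, b1, b2.trans hK2, a3, b3, zI a1, zK b2⟩, ?_⟩
  rintro ⟨U₁, U₂⟩ ⟨c1, c2, c3, c4, c5, c6, c7, c8⟩
  refine Prod.ext (a4 _ (sup_le c1 ?_) c2 c5) (b4 _ c3 (le_inf c4 c8) c6)
  rintro _ ⟨x, hx, rfl⟩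
  exact c7 x hx
end
end

section
/- Let (L₁, L'₁, L₂) ∈ Z(k,l), let 0 ≤ s ≤ N−l, suppose dim_ℂ ker(z|_{L₂/L₀}) ≥ l+s, dim_ℂ((L₁ ∩ L'₁)/L₀) ≥ k−s and dim_ℂ ker(z|_{L₂/L₀}) + dim_ℂ((L₁ ∩ L'₁)/L₀) ≤ k+l+1, and let (W₁, W₂) be the unique pair of R-submodules with L₀ ⊆ W₁ ⊆ L₁ ∩ L'₁, L₁ + L'₁ ⊆ W₂ ⊆ L₂, dim_ℂ(W₁/L₀) = k−s, dim_ℂ(W₂/L₀) = l+s, z·L₂ ⊆ W₁ and z·W₂ ⊆ L₀. Then: (a) multiplication by z induces a ℂ-linear map z̄ : L₂/W₂ → W₁/L₀ and dim_ℂ ker(z|_{L₂/L₀}) = (l+s) + dim_ℂ ker(z̄); (b) the inclusion L₁ ⊆ W₂ induces a ℂ-linear map ι : L₁/W₁ → W₂/L'₁ whose kernel is (L₁ ∩ L'₁)/W₁, and dim_ℂ((L₁ ∩ L'₁)/L₀) = (k−s) + dim_ℂ ker(ι). In particular, dim_ℂ ker(z|_{L₂/L₀}) ≥ l+s+1 if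 and only if z̄ fails to be injective, and dim_ℂ((L₁ ∩ L'₁)/L₀) ≥ k−s+1 if and only if ι fails to be injective. -/
open Polynomial

set_option synthInstance.maxHeartbeats 1000000
set_option maxHeartbeats 1000000

noncomputable section

def qIncl (m : ℕ) (A T B : SubM m) (h : T ≤ B) : QuotMod m A T →ₗ[ℂ] QuotMod m A B :=
  (Submodule.mapQ (A.comap T.subtype) (A.comap B.subtype) (Submodule.inclusion h)
    (fun _ hx => hx)).restrictScalars ℂ

lemma qIncl_mk (m : ℕ) (A T B : SubM m) (h : T ≤ B) (x : T) :
    qIncl m A T B h (Submodule.Quotient.mk x) =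
      Submodule.Quotient.mk (⟨x.1, h x.2⟩ : B) := rfl

lemma qIncl_inj (m : ℕ) (A T B : SubM m) (h : T ≤ B) :
    Function.Injective (qIncl m A T B h) := by
  rw [injective_iff_map_eq_zero]
  intro q hq
  obtain ⟨x, rfl⟩ := Submodule.Quotient.mk_surjective _ q
  rw [qIncl_mk, Submodule.Quotient.mk_eq_zero] at hq
  rw [Submodule.Quotient.mk_eq_zero]
  exact hq

def qProj (m : ℕ) (A B C : SubM m) (h : A ≤ B) : QuotMod m A C →ₗ[ℂ] QuotMod m B C :=
  (Submodule.mapQ (A.comap C.subtype) (B.comap C.subtype) LinearMap.id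
    (fun _ hx => h hx)).restrictScalars ℂ

lemma qProj_mk (m : ℕ) (A B C : SubM m) (h : A ≤ B) (x : C) :
    qProj m A B C h (Submodule.Quotient.mk x) = Submodule.Quotient.mk x := rfl

lemma qProj_surj (m : ℕ) (A B C : SubM m) (h : A ≤ B) :
    Function.Surjective (qProj m A B C h) := by
  intro q
  obtain ⟨x, rfl⟩ := Submodule.Quotient.mk_surjective _ q
  exact ⟨Submodule.Quotient.mk x, rfl⟩

lemma finrank_sub (m : ℕ) (A T B : SubM m) (h : T ≤ B)
    (S : Submodule ℂ (QuotMod m A B))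
    (hA : A ≤ T)
    (hS : ∀ x : B, (Submodule.Quotient.mk x : QuotMod m A B) ∈ S ↔ (x : KM m) ∈ T) :
    Module.finrank ℂ S = fdim m A T := by
  have hr : LinearMap.range (qIncl m A T B h) = S := by
    ext q
    obtain ⟨x, rfl⟩ := Submodule.Quotient.mk_surjective _ q
    rw [hS]
    constructor
    · rintro ⟨r, hr⟩
      obtain ⟨y, rfl⟩ := Submodule.Quotient.mk_surjective _ r
      rw [qIncl_mk, Submodule.Quotient.eq] at hr
      have h1 : (y : KM m) - x ∈ A := hr
      have := T.sub_mem y.2 (hA h1)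
      simpa using this
    · intro hx
      exact ⟨Submodule.Quotient.mk ⟨x, hx⟩, rfl⟩
  rw [← hr, LinearMap.finrank_range_of_inj (qIncl_inj m A T B h)]
  rfl

lemma fdim_add (m : ℕ) (A B C : SubM m) (h : A ≤ B) (h' : B ≤ C)
    [FiniteDimensional ℂ (QuotMod m A C)] :
    fdim m A C = fdim m A B + fdim m B C := by
  have h1 := LinearMap.finrank_range_add_finrank_ker (qProj m A B C h)
  rw [LinearMap.range_eq_top.2 (qProj_surj m A B C h), finrank_top,
    finrank_sub m A B C h' _ h] at h1
  · unfold fdim at *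
    omega
  · intro x
    rw [LinearMap.mem_ker, qProj_mk, Submodule.Quotient.mk_eq_zero]
    rfl

lemma fin_incl (m : ℕ) (A T B : SubM m) (h : T ≤ B)
    (hf : FiniteDimensional ℂ (QuotMod m A B)) : FiniteDimensional ℂ (QuotMod m A T) :=
  FiniteDimensional.of_injective _ (qIncl_inj m A T B h)

lemma fin_proj (m : ℕ) (A B C : SubM m) (h : A ≤ B)
    (hf : FiniteDimensional ℂ (QuotMod m A C)) : FiniteDimensional ℂ (QuotMod m B C) :=
  Module.Finite.of_surjective _ (qProj_surj m A B C h)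

lemma not_inj_iff {V W : Type*} [AddCommGroup V] [Module ℂ V] [AddCommGroup W] [Module ℂ W]
    [FiniteDimensional ℂ V] (f : V →ₗ[ℂ] W) :
    1 ≤ Module.finrank ℂ (LinearMap.ker f) ↔ ¬ Function.Injective f := by
  rw [← LinearMap.ker_eq_bot, ← Submodule.finrank_eq_zero (R := ℂ)]
  omega

/-- description of the divisors `D_{s,+}` and `D_{s,-}` via the maps
`z̄ : L₂/W₂ → W₁/L₀` (induced by multiplication by `z`) and `ι : L₁/W₁ → W₂/L'₁`
(induced by the inclusion `L₁ ⊆ W₂`). -/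
theorem statement12 (m : ℕ) (hm : 2 ≤ m) (k l : ℕ)
    (hk1 : 1 ≤ k) (hkl : k ≤ l) (hl : l ≤ m - 1) (hsum : k + l ≤ 2 * m - 2)
    (N : ℕ) (hN : N = min (k + l) m)
    (L₁ L₁' L₂ : SubM m) (hZ : InZkl m k l L₁ L₁' L₂)
    (s : ℕ) (hs : s ≤ N - l)
    (d : ℕ)
    (hd : d = Module.finrank ℂ
      ↥(LinearMap.ker (quotSmul m Polynomial.X (polyL0 m) L₂)))
    (hds : l + s ≤ d)
    (hint : k - s ≤ fdim m (polyL0 m) (L₁ ⊓ L₁'))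
    (ho : d + fdim m (polyL0 m) (L₁ ⊓ L₁') ≤ k + l + 1)
    (W₁ W₂ : SubM m)
    (hW11 : polyL0 m ≤ W₁) (hW12 : W₁ ≤ L₁ ⊓ L₁')
    (hW21 : L₁ ⊔ L₁' ≤ W₂) (hW22 : W₂ ≤ L₂)
    (hW1d : fdim m (polyL0 m) W₁ = k - s) (hW2d : fdim m (polyL0 m) W₂ = l + s)
    (hzW1 : ∀ x ∈ L₂, zmul0 m x ∈ W₁) (hzW2 : ∀ x ∈ W₂, zmul0 m x ∈ polyL0 m) :
    -- (a) the induced map z̄ : L₂/W₂ → W₁/L₀ exists ...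
    ((∃ zbar : QuotMod m W₂ L₂ →ₗ[ℂ] QuotMod m (polyL0 m) W₁,
        ∀ (x : ↥L₂) (y : ↥W₁), (y : KM m) = (Polynomial.X : Polynomial ℂ) • (x : KM m) →
          zbar (Submodule.Quotient.mk x) = Submodule.Quotient.mk y) ∧
      -- ... and for any such map, dim ker(z|_{L₂/L₀}) = (l+s) + dim ker z̄, and
      -- dim ker(z|_{L₂/L₀}) ≥ l+s+1 iff z̄ is not injective
      (∀ zbar : QuotMod m W₂ L₂ →ₗ[ℂ] QuotMod m (polyL0 m) W₁,
        (∀ (x : ↥L₂) (y : ↥W₁), (y : KM m) = (Polynomial.X : Polynomial ℂ) • (x : KM m) →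
          zbar (Submodule.Quotient.mk x) = Submodule.Quotient.mk y) →
        (d = (l + s) + Module.finrank ℂ ↥(LinearMap.ker zbar) ∧
          (l + s + 1 ≤ d ↔ ¬ Function.Injective zbar)))) ∧
    -- (b) the induced map ι : L₁/W₁ → W₂/L'₁ exists ...
    ((∃ ι : QuotMod m W₁ L₁ →ₗ[ℂ] QuotMod m L₁' W₂,
        ∀ (x : ↥L₁) (y : ↥W₂), (y : KM m) = (x : KM m) →
          ι (Submodule.Quotient.mk x) = Submodule.Quotient.mk y) ∧
      -- ... and any such map has kernel (L₁ ∩ L'₁)/W₁,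
      -- dim((L₁ ∩ L'₁)/L₀) = (k-s) + dim ker ι, and
      -- dim((L₁ ∩ L'₁)/L₀) ≥ k-s+1 iff ι is not injective
      (∀ ι : QuotMod m W₁ L₁ →ₗ[ℂ] QuotMod m L₁' W₂,
        (∀ (x : ↥L₁) (y : ↥W₂), (y : KM m) = (x : KM m) →
          ι (Submodule.Quotient.mk x) = Submodule.Quotient.mk y) →
        (LinearMap.ker ι =
            Submodule.restrictScalars ℂ
              (Submodule.map (Submodule.mkQ (W₁.comap L₁.subtype))
                ((L₁ ⊓ L₁').comap L₁.subtype)) ∧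
          fdim m (polyL0 m) (L₁ ⊓ L₁') = (k - s) + Module.finrank ℂ ↥(LinearMap.ker ι) ∧
          (k - s + 1 ≤ fdim m (polyL0 m) (L₁ ⊓ L₁') ↔ ¬ Function.Injective ι)))) := by
  obtain ⟨h01, h12, h01', h12', d1, d1', d2, -, -, -, -⟩ := hZ
  have hf : FiniteDimensional ℂ (QuotMod m (polyL0 m) L₂) := by
    apply FiniteDimensional.of_finrank_pos
    have : Module.finrank ℂ (QuotMod m (polyL0 m) L₂) = k + l := d2
    omega
  have h0W2 : polyL0 m ≤ W₂ := h01.trans (le_sup_left.trans hW21)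
  have hW1L1 : W₁ ≤ L₁ := hW12.trans inf_le_left
  have h1W2 : L₁ ≤ W₂ := le_sup_left.trans hW21
  have h1W2' : L₁' ≤ W₂ := le_sup_right.trans hW21
  have hf2 := fin_proj m _ W₂ L₂ h0W2 hf
  have hf1 := fin_proj m _ W₁ L₁ hW11 (fin_incl m _ _ _ h12 hf)
  refine ⟨⟨?_, ?_⟩, ?_, ?_⟩
  · let g : L₂ →ₗ[Polynomial ℂ] W₁ := (zmul0 m).restrict hzW1
    refine ⟨(Submodule.mapQ (W₂.comap L₂.subtype) ((polyL0 m).comap W₁.subtype) g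
      (fun x hx => hzW2 _ hx)).restrictScalars ℂ, ?_⟩
    intro x y hxy
    have : y = g x := Subtype.ext hxy
    rw [this]
    rfl
  · intro zbar hz
    let Kz : SubM m := L₂ ⊓ (polyL0 m).comap (zmul0 m)
    have hKL : Kz ≤ L₂ := inf_le_left
    have hWK : W₂ ≤ Kz := le_inf hW22 hzW2
    have e1 : d = fdim m (polyL0 m) Kz := by
      rw [hd]
      apply finrank_sub m _ _ _ hKL _ (h0W2.trans hWK)
      intro x
      have : quotSmul m Polynomial.X (polyL0 m) L₂ (Submodule.Quotient.mk x) =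
        Submodule.Quotient.mk ((Polynomial.X : Polynomial ℂ) • x) := rfl
      rw [LinearMap.mem_ker, this, Submodule.Quotient.mk_eq_zero]
      exact ⟨fun h => ⟨x.2, h⟩, fun h => h.2⟩
    have e2 : Module.finrank ℂ (LinearMap.ker zbar) = fdim m W₂ Kz := by
      apply finrank_sub m _ _ _ hKL _ hWK
      intro x
      rw [LinearMap.mem_ker, hz x ⟨zmul0 m x, hzW1 _ x.2⟩ rfl, Submodule.Quotient.mk_eq_zero]
      exact ⟨fun h => ⟨x.2, h⟩, fun h => h.2⟩
    have := fin_incl m _ _ _ hKL hf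
    have e3 := fdim_add m _ _ _ h0W2 hWK
    have e4 := not_inj_iff zbar
    refine ⟨by omega, ?_⟩
    rw [← e4]
    omega
  · refine ⟨(Submodule.mapQ (W₁.comap L₁.subtype) (L₁'.comap W₂.subtype)
      (Submodule.inclusion h1W2) (fun x hx => (hW12 hx).2)).restrictScalars ℂ, ?_⟩
    intro x y hxy
    have : y = Submodule.inclusion h1W2 x := Subtype.ext hxy
    rw [this]
    rfl
  · intro ι hι
    have key : ∀ x : L₁, (Submodule.Quotient.mk x : QuotMod m W₁ L₁) ∈ LinearMap.ker ι ↔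
        (x : KM m) ∈ L₁ ⊓ L₁' := by
      intro x
      rw [LinearMap.mem_ker, hι x ⟨x, h1W2 x.2⟩ rfl, Submodule.Quotient.mk_eq_zero]
      exact ⟨fun h => ⟨x.2, h⟩, fun h => h.2⟩
    have e2 : Module.finrank ℂ (LinearMap.ker ι) = fdim m W₁ (L₁ ⊓ L₁') :=
      finrank_sub m _ _ _ inf_le_left _ hW12 key
    have := fin_incl m (polyL0 m) (L₁ ⊓ L₁') L₂ (inf_le_left.trans h12) hf
    have e3 := fdim_add m _ _ _ hW11 hW12
    have e4 := not_inj_iff ι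
    refine ⟨?_, by omega, ?_⟩
    · ext q
      obtain ⟨x, rfl⟩ := Submodule.Quotient.mk_surjective _ q
      rw [key, Submodule.restrictScalars_mem]
      constructor
      · intro hx
        exact ⟨x, hx, rfl⟩
      · rintro ⟨y, hy, hyx⟩
        have h1 : (y : KM m) - x ∈ W₁ := (Submodule.Quotient.eq (W₁.comap L₁.subtype)).1 hyx
        have := (L₁ ⊓ L₁').sub_mem hy (hW12 h1)
        simpa using this
    · rw [← e4]
      omega
end
end
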